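/- arXiv:1911.10067 — 11 statements merged into one kernel-verified Lean document; each statement's English description precedes it below -/
import Mathlib

section
/- Let Ξ > 0, let b ≠ 0, λ₂, K be real numbers, and let v : ℝ → ℝ be a continuous Ξ-periodic non-constant function with v > 0 everywhere; set u := K − λ₂/v. Writing ⟨·⟩ for the mean value (1/Ξ)∫₀^Ξ, one has ⟨v⟩ · ⟨1/v⟩ > 1 and ⟨v u⟩/b − ⟨v⟩⟨u⟩/b = (λ₂/b)(⟨v⟩⟨1/v⟩ − 1); in particular this quantity is strictly positive if λ₂/b > 0, strictly negative if λ₂/b < 0, and zero if λ₂ = 0. -/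
/-- Eulerian Euler–Korteweg case (`N = 2`, `τ = Id`): with
`u = K − l₂/v` along a positive, non-constant periodic profile `v`, one has
`⟨v⟩⟨1/v⟩ > 1` and `⟨v u⟩/b − ⟨v⟩⟨u⟩/b = (l₂/b)(⟨v⟩⟨1/v⟩ − 1)`, whose sign is
that of `l₂/b`. -/
theorem stmt2 (Ξ b l₂ K : ℝ) (hΞ : 0 < Ξ) (hb : b ≠ 0) (v : ℝ → ℝ)
    (hcont : Continuous v) (hper : Function.Periodic v Ξ)
    (hpos : ∀ x : ℝ, 0 < v x) (hnc : ¬ ∃ a : ℝ, ∀ x : ℝ, v x = a) :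
    let u : ℝ → ℝ := fun x => K - l₂ / v x
    let mean : (ℝ → ℝ) → ℝ := fun f => (1 / Ξ) * ∫ ξ in (0:ℝ)..Ξ, f ξ
    1 < mean v * mean (fun x => 1 / v x) ∧
    mean (fun x => v x * u x) / b - mean v * mean u / b
      = (l₂ / b) * (mean v * mean (fun x => 1 / v x) - 1) ∧
    (0 < l₂ / b → 0 < mean (fun x => v x * u x) / b - mean v * mean u / b) ∧
    (l₂ / b < 0 → mean (fun x => v x * u x) / b - mean v * mean u / b < 0) ∧
    (l₂ = 0 → mean (fun x => v x * u x) / b - mean v * mean u / b = 0) := by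
  intro u mean
  have hne : ∀ x, v x ≠ 0 := fun x => (hpos x).ne'
  have hinv : Continuous (fun x => 1 / v x) := continuous_const.div hcont hne
  have hI : IntervalIntegrable v MeasureTheory.volume 0 Ξ := hcont.intervalIntegrable _ _
  have hJ : IntervalIntegrable (fun x => 1 / v x) MeasureTheory.volume 0 Ξ :=
    hinv.intervalIntegrable _ _
  have hu : mean u = K - l₂ * mean (fun x => 1 / v x) := by
    have h1 : u = fun x => K - l₂ * (1 / v x) := by
      funext x
      simp only [u]
      ring
    simp only [mean, h1]
    rw [intervalIntegral.integral_sub (by simp) (hJ.const_mul l₂),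
      intervalIntegral.integral_const_mul, intervalIntegral.integral_const]
    simp only [smul_eq_mul]
    field_simp
    ring
  have hvu : mean (fun x => v x * u x) = K * mean v - l₂ := by
    have h1 : (fun x => v x * u x) = fun x => K * v x - l₂ := by
      funext x
      have := hne x
      simp only [u]
      field_simp
    simp only [mean, h1]
    rw [intervalIntegral.integral_sub (hI.const_mul K) (by simp),
      intervalIntegral.integral_const_mul, intervalIntegral.integral_const]
    simp only [smul_eq_mul]
    field_simp
    ring
  have hm : 0 < mean v :=
    mul_pos (by positivity)
      (intervalIntegral.intervalIntegral_pos_of_pos hI hpos hΞ)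
  have key : 1 < mean v * mean (fun x => 1 / v x) := by
    obtain ⟨m, hmd⟩ : ∃ m, m = mean v := ⟨_, rfl⟩
    rw [← hmd] at hm ⊢
    have hc : ∃ c ∈ Set.Icc (0:ℝ) Ξ, 0 < v c - 2 * m + m ^ 2 * (1 / v c) := by
      by_contra hcon
      push Not at hcon
      apply hnc
      refine ⟨m, fun x => ?_⟩
      obtain ⟨y, hy, hxy⟩ := hper.exists_mem_Ico₀ hΞ x
      have h := hcon y ⟨hy.1, hy.2.le⟩
      have hp := hpos y
      have h2 : v y - 2 * m + m ^ 2 * (1 / v y) = (v y - m) ^ 2 / v y := by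
        field_simp
        ring
      rw [h2, div_le_iff₀ hp, zero_mul] at h
      have h3 : v y - m = 0 := pow_eq_zero_iff (two_ne_zero) |>.1 (le_antisymm h (sq_nonneg _))
      rw [hxy]
      linarith
    have hpi : 0 < ∫ x in (0:ℝ)..Ξ, (v x - 2 * m + m ^ 2 * (1 / v x)) := by
      refine intervalIntegral.integral_pos hΞ
        ((hcont.sub continuous_const).add (continuous_const.mul hinv)).continuousOn ?_ hc
      intro x _
      have hp := hpos x
      have h2 : v x - 2 * m + m ^ 2 * (1 / v x) = (v x - m) ^ 2 / v x := by
        field_simp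
        ring
      rw [h2]
      positivity
    rw [intervalIntegral.integral_add (hI.sub (by simp)) (hJ.const_mul _),
      intervalIntegral.integral_sub hI (by simp),
      intervalIntegral.integral_const, intervalIntegral.integral_const_mul] at hpi
    have e1 : (∫ x in (0:ℝ)..Ξ, v x) = Ξ * m := by
      rw [hmd]
      simp only [mean]
      field_simp
    have e2 : (∫ x in (0:ℝ)..Ξ, 1 / v x) = Ξ * mean (fun x => 1 / v x) := by
      simp only [mean]
      field_simp
    rw [e1, e2, smul_eq_mul] at hpi
    have h4 : 0 < (Ξ * m) * (m * mean (fun x => 1 / v x) - 1) := by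
      linarith
    have h5 := (mul_pos_iff_of_pos_left (mul_pos hΞ hm)).1 h4
    linarith
  have id : mean (fun x => v x * u x) / b - mean v * mean u / b
      = (l₂ / b) * (mean v * mean (fun x => 1 / v x) - 1) := by
    rw [hu, hvu]
    ring
  refine ⟨key, id, ?_, ?_, ?_⟩
  · intro h
    rw [id]
    exact mul_pos h (by linarith)
  · intro h
    rw [id]
    exact mul_neg_of_neg_of_pos h (by linarith)
  · intro h
    rw [id, h]
    simp
end

section
/- Let b ≠ 0 and let f, κ : ℝ → ℝ be smooth with κ > 0 everywhere. For real (c, λ) set W(v; c, λ) := −f(v) − (c/(2b)) v² − λ v. Let Ω ⊆ ℝ³ be open with coordinates (μ, c, λ), and suppose given a smooth function v̲ : Ω × ℝ → ℝ and a smooth function Ξ : Ω → (0, ∞) such that for each (μ, c, λ) ∈ Ω the function ξ ↦ v̲(μ, c, λ; ξ) is non-constant, periodic with least period Ξ(μ, c, λ), and satisfies the profile equation κ(v̲) v̲'' + (1/2) κ'(v̲)(v̲')² + ∂_v W(v̲; c, λ) = 0 together with the first integral (1/2) κ(v̲)(v̲')² + W(v̲; c, λ) = μ. Then the abbreviated action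 Θ(μ, c, λ) := ∫₀^{Ξ(μ,c,λ)} ( (1/2) κ(v̲)(v̲')² + f(v̲) + (c/(2b)) v̲² + λ v̲ + μ ) dξ is smooth on Ω, with ∂_μΘ = Ξ, ∂_cΘ = ∫₀^{Ξ} v̲²/(2b) dξ, and ∂_λΘ = ∫₀^{Ξ} v̲ dξ. -/
open MeasureTheory Set Topology in
theorem aux_hasFDerivAt {F : Type} [NormedAddCommGroup F] [NormedSpace ℝ F] [CompleteSpace F]
    (Ω : Set (ℝ × ℝ × ℝ)) (hΩ : IsOpen Ω) (G : (ℝ × ℝ × ℝ) × ℝ → F)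
    (hG : ContDiffOn ℝ (⊤ : ℕ∞) G (Ω ×ˢ univ)) (p : ℝ × ℝ × ℝ) (hp : p ∈ Ω) :
    HasFDerivAt (fun p => ∫ s in (0:ℝ)..1, G (p, s))
      (∫ s in (0:ℝ)..1, (fderiv ℝ G (p, s)).comp (ContinuousLinearMap.inl ℝ (ℝ × ℝ × ℝ) ℝ)) p := by
  have hD : IsOpen (Ω ×ˢ (univ : Set ℝ)) := hΩ.prod isOpen_univ
  have hdG : ContinuousOn (fun q => (fderiv ℝ G q).comp (ContinuousLinearMap.inl ℝ (ℝ × ℝ × ℝ) ℝ))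
      (Ω ×ˢ univ) := by
    have h1 : ContinuousOn (fderiv ℝ G) (Ω ×ˢ univ) :=
      (hG.fderiv_of_isOpen (m := 0) hD (by norm_num)).continuousOn
    exact h1.clm_comp continuousOn_const
  have hmap : ∀ x ∈ Ω, Continuous (fun s : ℝ => G (x, s)) := fun x hx =>
    hG.continuousOn.comp_continuous (by fun_prop) (fun s => ⟨hx, mem_univ _⟩)
  obtain ⟨K, hK, hKΩ, hKc⟩ := local_compact_nhds (hΩ.mem_nhds hp)
  have hcomp : IsCompact (K ×ˢ Icc (0:ℝ) 1) := hKc.prod isCompact_Icc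
  obtain ⟨C, hC⟩ := hcomp.exists_bound_of_continuousOn
    (hdG.mono (prod_mono hKΩ (subset_univ _)))
  refine intervalIntegral.hasFDerivAt_integral_of_dominated_of_fderiv_le (s := K)
    (F := fun p s => G (p, s))
    (F' := fun p s => (fderiv ℝ G (p, s)).comp (ContinuousLinearMap.inl ℝ (ℝ × ℝ × ℝ) ℝ))
    (bound := fun _ => C) hK ?_ ?_ ?_ ?_ ?_ ?_
  · filter_upwards [hΩ.mem_nhds hp] with x hx
    exact (hmap x hx).aestronglyMeasurable
  · exact (hmap p hp).intervalIntegrable _ _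
  · have : Continuous (fun s : ℝ =>
        (fderiv ℝ G (p, s)).comp (ContinuousLinearMap.inl ℝ (ℝ × ℝ × ℝ) ℝ)) :=
      hdG.comp_continuous (f := fun s : ℝ => (p, s)) (by fun_prop) (fun s => ⟨hp, mem_univ _⟩)
    exact this.aestronglyMeasurable
  · refine Filter.Eventually.of_forall fun t ht x hx => hC (x, t) ⟨hx, ?_⟩
    rw [uIoc_of_le zero_le_one] at ht
    exact ⟨ht.1.le, ht.2⟩
  · exact intervalIntegrable_const
  · refine Filter.Eventually.of_forall fun t _ x hx => ?_
    have h1 : HasFDerivAt G (fderiv ℝ G (x, t)) (x, t) :=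
      ((hG.contDiffAt (hD.mem_nhds ⟨hKΩ hx, mem_univ _⟩)).differentiableAt
        (by simp)).hasFDerivAt
    exact h1.comp x (hasFDerivAt_prodMk_left x t)

open MeasureTheory Set Topology in
theorem aux_contDiff (Ω : Set (ℝ × ℝ × ℝ)) (hΩ : IsOpen Ω) (n : ℕ) :
    ∀ {F : Type} [NormedAddCommGroup F] [NormedSpace ℝ F] [CompleteSpace F]
    (G : (ℝ × ℝ × ℝ) × ℝ → F) (_ : ContDiffOn ℝ (⊤ : ℕ∞) G (Ω ×ˢ univ)),
    ContDiffOn ℝ n (fun p => ∫ s in (0:ℝ)..1, G (p, s)) Ω := by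
  have hD : IsOpen (Ω ×ˢ (univ : Set ℝ)) := hΩ.prod isOpen_univ
  induction n with
  | zero =>
    intro F _ _ _ G hG
    simp only [CharP.cast_eq_zero, contDiffOn_zero]
    exact fun p hp => (aux_hasFDerivAt Ω hΩ G hG p hp).continuousAt.continuousWithinAt
  | succ n ih =>
    intro F _ _ _ G hG
    push_cast
    rw [contDiffOn_succ_iff_fderiv_of_isOpen hΩ]
    refine ⟨fun p hp =>
      (aux_hasFDerivAt Ω hΩ G hG p hp).differentiableAt.differentiableWithinAt, ?_, ?_⟩
    · intro h; simp at h
    · have h1 : ContDiffOn ℝ (⊤ : ℕ∞) (fderiv ℝ G) (Ω ×ˢ univ) :=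
        hG.fderiv_of_isOpen hD (by simp)
      refine (ih _ (h1.clm_comp (contDiffOn_const
        (c := ContinuousLinearMap.inl ℝ (ℝ × ℝ × ℝ) ℝ)))).congr fun p hp => ?_
      exact (aux_hasFDerivAt Ω hΩ G hG p hp).fderiv

open MeasureTheory Set Topology in
theorem aux_main (b : ℝ) (hb : b ≠ 0) (f κ : ℝ → ℝ)
    (hf : ContDiff ℝ (⊤ : ℕ∞) f) (hκ : ContDiff ℝ (⊤ : ℕ∞) κ)
    (Ω : Set (ℝ × ℝ × ℝ)) (hΩ : IsOpen Ω)
    (V : ℝ × ℝ × ℝ → ℝ → ℝ) (Ξ : ℝ × ℝ × ℝ → ℝ)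
    (hV : ContDiffOn ℝ (⊤ : ℕ∞) (fun q : (ℝ × ℝ × ℝ) × ℝ => V q.1 q.2) (Ω ×ˢ Set.univ))
    (hΞsmooth : ContDiffOn ℝ (⊤ : ℕ∞) Ξ Ω)
    (hper : ∀ p ∈ Ω, Function.Periodic (V p) (Ξ p))
    (hODE : ∀ p ∈ Ω, ∀ ξ : ℝ,
      κ (V p ξ) * deriv (deriv (V p)) ξ
        + (1/2) * deriv κ (V p ξ) * (deriv (V p) ξ) ^ 2
        + (-(deriv f (V p ξ)) - (p.2.1 / b) * V p ξ - p.2.2) = 0)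
    (hfirst : ∀ p ∈ Ω, ∀ ξ : ℝ,
      (1/2) * κ (V p ξ) * (deriv (V p) ξ) ^ 2
        + (-(f (V p ξ)) - (p.2.1 / (2*b)) * (V p ξ) ^ 2 - p.2.2 * V p ξ) = p.1) :
    ContDiffOn ℝ (⊤ : ℕ∞)
      (fun p : ℝ × ℝ × ℝ => ∫ ξ in (0:ℝ)..(Ξ p),
        ((1/2) * κ (V p ξ) * (deriv (V p) ξ) ^ 2 + f (V p ξ)
          + (p.2.1 / (2*b)) * (V p ξ) ^ 2 + p.2.2 * V p ξ + p.1)) Ω ∧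
    ∀ p ∈ Ω, ∀ e : ℝ × ℝ × ℝ, ∀ γ : ℝ → ℝ × ℝ × ℝ, ∀ t : ℝ, γ t = p → HasDerivAt γ e t →
      HasDerivAt (fun t : ℝ => ∫ ξ in (0:ℝ)..(Ξ (γ t)),
        ((1/2) * κ (V (γ t) ξ) * (deriv (V (γ t)) ξ) ^ 2 + f (V (γ t) ξ)
          + ((γ t).2.1 / (2*b)) * (V (γ t) ξ) ^ 2 + (γ t).2.2 * V (γ t) ξ + (γ t).1))
      (∫ ξ in (0:ℝ)..(Ξ p), (e.1 + e.2.1 * ((V p ξ) ^ 2 / (2*b)) + e.2.2 * V p ξ)) t := by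
  have hD : IsOpen (Ω ×ˢ (univ : Set ℝ)) := hΩ.prod isOpen_univ
  set v : (ℝ × ℝ × ℝ) × ℝ → ℝ := fun q => V q.1 q.2 with hv
  set w : (ℝ × ℝ × ℝ) × ℝ → ℝ := fun q => fderiv ℝ v q (0, 1) with hw
  have hfv : ContDiffOn ℝ (⊤ : ℕ∞) (fderiv ℝ v) (Ω ×ˢ univ) :=
    hV.fderiv_of_isOpen hD (by simp)
  have hws : ContDiffOn ℝ (⊤ : ℕ∞) w (Ω ×ˢ univ) := hfv.clm_apply contDiffOn_const
  have hvF : ∀ p ∈ Ω, ∀ ξ, HasFDerivAt v (fderiv ℝ v (p, ξ)) (p, ξ) := fun p hp ξ =>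
    ((hV.contDiffAt (hD.mem_nhds ⟨hp, mem_univ _⟩)).differentiableAt (by simp)).hasFDerivAt
  have hwF : ∀ p ∈ Ω, ∀ ξ, HasFDerivAt w (fderiv ℝ w (p, ξ)) (p, ξ) := fun p hp ξ =>
    ((hws.contDiffAt (hD.mem_nhds ⟨hp, mem_univ _⟩)).differentiableAt (by simp)).hasFDerivAt
  have hvξ : ∀ p ∈ Ω, ∀ ξ, HasDerivAt (V p) (w (p, ξ)) ξ := fun p hp ξ =>
    (hvF p hp ξ).comp_hasDerivAt ξ ((hasDerivAt_const ξ p).prodMk (hasDerivAt_id ξ))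
  have hdV : ∀ p ∈ Ω, deriv (V p) = fun ξ => w (p, ξ) := fun p hp =>
    funext fun ξ => (hvξ p hp ξ).deriv
  have hwξ : ∀ p ∈ Ω, ∀ ξ, HasDerivAt (fun ξ => w (p, ξ)) (fderiv ℝ w (p, ξ) (0, 1)) ξ :=
    fun p hp ξ =>
    (hwF p hp ξ).comp_hasDerivAt ξ ((hasDerivAt_const ξ p).prodMk (hasDerivAt_id ξ))
  have hddV : ∀ p ∈ Ω, ∀ ξ, deriv (deriv (V p)) ξ = fderiv ℝ w (p, ξ) (0, 1) := fun p hp ξ => by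
    rw [hdV p hp]; exact (hwξ p hp ξ).deriv
  set L : (ℝ × ℝ × ℝ) × ℝ → ℝ := fun q =>
    (1/2) * κ (v q) * (w q) ^ 2 + f (v q) + (q.1.2.1 / (2*b)) * (v q) ^ 2 + q.1.2.2 * v q + q.1.1
    with hL
  have hLs : ContDiffOn ℝ (⊤ : ℕ∞) L (Ω ×ˢ univ) := by
    have h1 := hκ.comp_contDiffOn hV
    have h2 := hf.comp_contDiffOn hV
    have hc : ContDiffOn ℝ (⊤ : ℕ∞) (fun q : (ℝ × ℝ × ℝ) × ℝ => q.1.2.1 / (2*b)) (Ω ×ˢ univ) :=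
      by fun_prop
    have hl : ContDiffOn ℝ (⊤ : ℕ∞) (fun q : (ℝ × ℝ × ℝ) × ℝ => q.1.2.2) (Ω ×ˢ univ) :=
      by fun_prop
    have hm : ContDiffOn ℝ (⊤ : ℕ∞) (fun q : (ℝ × ℝ × ℝ) × ℝ => q.1.1) (Ω ×ˢ univ) :=
      by fun_prop
    exact (((((contDiffOn_const.mul h1).mul (hws.pow 2)).add h2).add (hc.mul (hV.pow 2))).add
      (hl.mul hV)).add hm
  have hLF : ∀ p ∈ Ω, ∀ ξ, HasFDerivAt L (fderiv ℝ L (p, ξ)) (p, ξ) := fun p hp ξ =>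
    ((hLs.contDiffAt (hD.mem_nhds ⟨hp, mem_univ _⟩)).differentiableAt (by simp)).hasFDerivAt
  have hLd : ∀ p ∈ Ω, ∀ ξ, ∀ d : (ℝ × ℝ × ℝ) × ℝ, fderiv ℝ L (p, ξ) d =
      ((1/2) * deriv κ (v (p, ξ)) * (w (p, ξ))^2 + deriv f (v (p, ξ)) + p.2.1 / b * v (p, ξ)
        + p.2.2) * fderiv ℝ v (p, ξ) d
      + κ (v (p, ξ)) * w (p, ξ) * fderiv ℝ w (p, ξ) d
      + (d.1.1 + d.1.2.1 * ((v (p, ξ))^2 / (2*b)) + d.1.2.2 * v (p, ξ)) := by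
    intro p hp ξ d
    have e1 : HasDerivAt (fun t : ℝ => v ((p, ξ) + t • d)) _ 0 :=
      (hvF p hp ξ).hasLineDerivAt d
    have e2 : HasDerivAt (fun t : ℝ => w ((p, ξ) + t • d)) _ 0 :=
      (hwF p hp ξ).hasLineDerivAt d
    have e3 : HasDerivAt (fun t : ℝ => L ((p, ξ) + t • d)) _ 0 :=
      (hLF p hp ξ).hasLineDerivAt d
    have hl : HasDerivAt (fun t : ℝ => (p, ξ) + t • d) d 0 := by
      simpa using ((hasDerivAt_id (0:ℝ)).smul_const d).const_add (p, ξ)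
    have hc : HasDerivAt (fun t : ℝ => ((p, ξ) + t • d).1.2.1) d.1.2.1 0 := by
      simpa using ((hasDerivAt_id (0:ℝ)).mul_const d.1.2.1).const_add p.2.1
    have hla : HasDerivAt (fun t : ℝ => ((p, ξ) + t • d).1.2.2) d.1.2.2 0 := by
      simpa using ((hasDerivAt_id (0:ℝ)).mul_const d.1.2.2).const_add p.2.2
    have hm : HasDerivAt (fun t : ℝ => ((p, ξ) + t • d).1.1) d.1.1 0 := by
      simpa using ((hasDerivAt_id (0:ℝ)).mul_const d.1.1).const_add p.1
    have k1 : HasDerivAt (fun t : ℝ => κ (v ((p, ξ) + t • d))) _ 0 :=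
      ((hκ.differentiable (by simp)) (v ((p, ξ) + (0:ℝ) • d))).hasDerivAt.comp 0 e1
    have k2 : HasDerivAt (fun t : ℝ => f (v ((p, ξ) + t • d))) _ 0 :=
      ((hf.differentiable (by simp)) (v ((p, ξ) + (0:ℝ) • d))).hasDerivAt.comp 0 e1
    have k := (((((k1.const_mul (1/2)).mul (e2.pow 2)).add k2).add
      ((hc.div_const (2*b)).mul (e1.pow 2))).add (hla.mul e1)).add hm
    have := e3.unique k
    rw [this]
    simp only [zero_smul, add_zero, Pi.pow_apply]
    field_simp
    ring
  set G : (ℝ × ℝ × ℝ) × ℝ → ℝ := fun q => Ξ q.1 * L (q.1, Ξ q.1 * q.2) with hG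
  have hΞ1 : ContDiffOn ℝ (⊤ : ℕ∞) (fun q : (ℝ × ℝ × ℝ) × ℝ => Ξ q.1) (Ω ×ˢ univ) :=
    hΞsmooth.comp contDiffOn_fst (fun q hq => hq.1)
  have hGs : ContDiffOn ℝ (⊤ : ℕ∞) G (Ω ×ˢ univ) :=
    hΞ1.mul (hLs.comp (contDiffOn_fst.prodMk (hΞ1.mul contDiffOn_snd))
      (fun q hq => ⟨hq.1, mem_univ _⟩))
  have hΘ : ∀ p ∈ Ω, (∫ ξ in (0:ℝ)..(Ξ p),
        ((1/2) * κ (V p ξ) * (deriv (V p) ξ) ^ 2 + f (V p ξ)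
          + (p.2.1 / (2*b)) * (V p ξ) ^ 2 + p.2.2 * V p ξ + p.1)) = ∫ s in (0:ℝ)..1, G (p, s) := by
    intro p hp
    rw [hdV p hp]
    have := intervalIntegral.mul_integral_comp_mul_left (a := 0) (b := 1)
      (f := fun ξ => L (p, ξ)) (c := Ξ p)
    simp only [mul_zero, mul_one] at this
    rw [← intervalIntegral.integral_const_mul] at this
    exact this.symm
  constructor
  · refine ContDiffOn.congr ?_ hΘ
    rw [contDiffOn_infty]
    exact fun n => aux_contDiff Ω hΩ n G hGs
  intro p hp e γ t hγt hγ
  have hΞF : HasFDerivAt Ξ (fderiv ℝ Ξ p) p :=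
    ((hΞsmooth.contDiffAt (hΩ.mem_nhds hp)).differentiableAt (by simp)).hasFDerivAt
  have hmain := aux_hasFDerivAt Ω hΩ G hGs p hp
  have hmain2 : HasFDerivAt (fun p : ℝ × ℝ × ℝ => ∫ ξ in (0:ℝ)..(Ξ p),
        ((1/2) * κ (V p ξ) * (deriv (V p) ξ) ^ 2 + f (V p ξ)
          + (p.2.1 / (2*b)) * (V p ξ) ^ 2 + p.2.2 * V p ξ + p.1)) _ p :=
    hmain.congr_of_eventuallyEq (by
      filter_upwards [hΩ.mem_nhds hp] with x hx using hΘ x hx)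
  subst hγt
  have hfin := hmain2.comp_hasDerivAt t hγ
  generalize γ t = p at *
  refine hfin.congr_deriv ?_
  -- the integral identity
  have hdGc : Continuous (fun s : ℝ =>
      (fderiv ℝ G (p, s)).comp (ContinuousLinearMap.inl ℝ (ℝ × ℝ × ℝ) ℝ)) := by
    have h1 : ContinuousOn (fderiv ℝ G) (Ω ×ˢ univ) :=
      (hGs.fderiv_of_isOpen (m := 0) hD (by norm_num)).continuousOn
    exact (h1.comp_continuous (f := fun s : ℝ => (p, s)) (by fun_prop)
      (fun s => ⟨hp, mem_univ _⟩)).clm_comp continuous_const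
  rw [ContinuousLinearMap.intervalIntegral_apply (hdGc.intervalIntegrable _ _)]
  simp only [ContinuousLinearMap.comp_apply, ContinuousLinearMap.inl_apply]
  set Ξ' := fderiv ℝ Ξ p e with hΞ'
  have hdG : ∀ s, fderiv ℝ G (p, s) (e, 0) =
      Ξ' * L (p, Ξ p * s) + Ξ p * fderiv ℝ L (p, Ξ p * s) (e, Ξ' * s) := by
    intro s
    have e1 : HasDerivAt (fun t : ℝ => G ((p, s) + t • (e, (0:ℝ)))) _ 0 :=
      (((hGs.contDiffAt (hD.mem_nhds ⟨hp, mem_univ _⟩)).differentiableAt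
        (by simp)).hasFDerivAt (x := (p, s))).hasLineDerivAt (e, (0:ℝ))
    have e2 : HasDerivAt (fun t : ℝ => Ξ (p + t • e)) Ξ' 0 := hΞF.hasLineDerivAt e
    have hl : HasDerivAt (fun t : ℝ => p + t • e) e 0 := by
      simpa using ((hasDerivAt_id (0:ℝ)).smul_const e).const_add p
    have e3 : HasDerivAt (fun t : ℝ => L (p + t • e, Ξ (p + t • e) * s))
        (fderiv ℝ L (p, Ξ p * s) (e, Ξ' * s)) 0 := by
      have hL0 : HasFDerivAt L (fderiv ℝ L (p, Ξ p * s))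
          ((fun t : ℝ => (p + t • e, Ξ (p + t • e) * s)) 0) := by
        simpa using hLF p hp (Ξ p * s)
      exact hL0.comp_hasDerivAt 0 (hl.prodMk (e2.mul_const s))
    have e4 := e2.mul e3
    simp only [zero_smul, add_zero] at e4
    refine e1.unique (e4.congr_of_eventuallyEq (Filter.Eventually.of_forall fun t => ?_))
    simp [hG]
  -- symmetry
  have hsymm : ∀ ξ, HasDerivAt (fun ξ => fderiv ℝ v (p, ξ) (e, 0)) (fderiv ℝ w (p, ξ) (e, 0)) ξ := by
    intro ξ
    have hvat := hV.contDiffAt (hD.mem_nhds (x := (p, ξ)) ⟨hp, mem_univ _⟩)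
    have hs : IsSymmSndFDerivAt ℝ v (p, ξ) := hvat.isSymmSndFDerivAt (by
      rw [minSmoothness_of_isRCLikeNormedField]; exact WithTop.coe_le_coe.2 (le_top : (2 : ℕ∞) ≤ ⊤))
    have hff : HasFDerivAt (fderiv ℝ v) (fderiv ℝ (fderiv ℝ v) (p, ξ)) (p, ξ) :=
      ((hfv.contDiffAt (hD.mem_nhds ⟨hp, mem_univ _⟩)).differentiableAt (by simp)).hasFDerivAt
    have h1 : fderiv ℝ w (p, ξ) (e, 0) = fderiv ℝ (fderiv ℝ v) (p, ξ) (e, 0) (0, 1) := by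
      have := (hff.clm_apply (hasFDerivAt_const ((0, 1) : (ℝ × ℝ × ℝ) × ℝ) (p, ξ))).fderiv
      rw [hw, this]
      simp
    rw [h1, hs.eq (e, 0) (0, 1)]
    have h2 : HasDerivAt (fun ξ => fderiv ℝ v (p, ξ)) (fderiv ℝ (fderiv ℝ v) (p, ξ) (0, 1)) ξ :=
      hff.comp_hasDerivAt ξ ((hasDerivAt_const ξ p).prodMk (hasDerivAt_id ξ))
    simpa using h2.clm_apply (hasDerivAt_const ξ ((e, 0) : (ℝ × ℝ × ℝ) × ℝ))
  set z : ℝ → ℝ := fun ξ => fderiv ℝ v (p, ξ) (e, 0) with hz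
  have hLξ : ∀ ξ, HasDerivAt (fun ξ => L (p, ξ)) (fderiv ℝ L (p, ξ) (0, 1)) ξ := fun ξ =>
    (hLF p hp ξ).comp_hasDerivAt ξ ((hasDerivAt_const ξ p).prodMk (hasDerivAt_id ξ))
  set E : ℝ → ℝ := fun ξ => e.1 + e.2.1 * ((V p ξ) ^ 2 / (2*b)) + e.2.2 * V p ξ with hE
  have hM : ∀ ξ, HasDerivAt (fun ξ => κ (V p ξ) * w (p, ξ) * z ξ)
      (fderiv ℝ L (p, ξ) (e, 0) - E ξ) ξ := by
    intro ξ
    have k1 : HasDerivAt (fun ξ => κ (V p ξ)) _ ξ :=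
      ((hκ.differentiable (by simp)) (V p ξ)).hasDerivAt.comp ξ (hvξ p hp ξ)
    refine ((k1.mul (hwξ p hp ξ)).mul (hsymm ξ)).congr_deriv ?_
    rw [hLd p hp ξ]
    have ho := hODE p hp ξ
    rw [hddV p hp, hdV p hp] at ho
    simp only [hE, hz, hv, Pi.mul_apply] at *
    linear_combination (fderiv ℝ (fun q : (ℝ × ℝ × ℝ) × ℝ => V q.1 q.2) (p, ξ) (e, 0)) * ho
  have hVc : Continuous (V p) := continuous_iff_continuousAt.2 fun ξ => (hvξ p hp ξ).continuousAt
  have hEc : Continuous E := by fun_prop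
  have hψ : ∀ s, HasDerivAt (fun s => Ξ' * s * L (p, Ξ p * s)
      + κ (V p (Ξ p * s)) * w (p, Ξ p * s) * z (Ξ p * s))
      (fderiv ℝ G (p, s) (e, 0) - Ξ p * E (Ξ p * s)) s := by
    intro s
    have hl : HasDerivAt (fun s => Ξ p * s) (Ξ p) s := by
      simpa using (hasDerivAt_id s).const_mul (Ξ p)
    have hl' : HasDerivAt (fun s => Ξ' * s) Ξ' s := by
      simpa using (hasDerivAt_id s).const_mul Ξ'
    have a1 : HasDerivAt (fun s => L (p, Ξ p * s)) _ s := (hLξ (Ξ p * s)).comp s hl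
    have a2 : HasDerivAt (fun s => κ (V p (Ξ p * s)) * w (p, Ξ p * s) * z (Ξ p * s)) _ s :=
      (hM (Ξ p * s)).comp s hl
    refine ((hl'.mul a1).add a2).congr_deriv ?_
    rw [hdG]
    have : ((e, Ξ' * s) : (ℝ × ℝ × ℝ) × ℝ) = (e, 0) + (Ξ' * s) • (0, 1) := by simp
    rw [this, map_add, map_smul, smul_eq_mul]
    ring
  have hGc : Continuous (fun s : ℝ => fderiv ℝ G (p, s) (e, 0)) :=
    hdGc.clm_apply (continuous_const (y := e))
  have hEc2 : Continuous (fun s => Ξ p * E (Ξ p * s)) := by fun_prop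
  have hFTC := intervalIntegral.integral_eq_sub_of_hasDerivAt (a := 0) (b := 1)
    (fun s _ => hψ s) ((hGc.sub hEc2).intervalIntegrable _ _)
  rw [intervalIntegral.integral_sub (hGc.intervalIntegrable _ _) (hEc2.intervalIntegrable _ _)]
    at hFTC
  have hsc := intervalIntegral.mul_integral_comp_mul_left (a := 0) (b := 1) (f := E) (c := Ξ p)
  rw [← intervalIntegral.integral_const_mul] at hsc
  simp only [mul_zero, mul_one, zero_mul, zero_add] at hsc hFTC
  rw [hsc] at hFTC
  -- boundary terms
  have hV0 : V p (Ξ p) = V p 0 := by simpa using hper p hp 0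
  have hw0 : w (p, Ξ p) = w (p, 0) := by
    have h1 : HasDerivAt (fun ξ => V p (ξ + Ξ p)) (w (p, 0 + Ξ p)) 0 :=
      (hvξ p hp (0 + Ξ p)).comp_add_const 0 (Ξ p)
    have h2 : (fun ξ => V p (ξ + Ξ p)) = V p := funext (hper p hp)
    rw [h2] at h1
    have := h1.unique (hvξ p hp 0)
    simpa using this
  have hz0 : z (Ξ p) + Ξ' * w (p, Ξ p) = z 0 := by
    have h1 : HasFDerivAt (fun x => v (x, Ξ x))
        ((fderiv ℝ v (p, Ξ p)).comp ((ContinuousLinearMap.id ℝ _).prod (fderiv ℝ Ξ p))) p :=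
      HasFDerivAt.comp (g := v) (f := fun x => (x, Ξ x)) p (hvF p hp (Ξ p)) ((hasFDerivAt_id p).prodMk hΞF)
    have h2 : HasFDerivAt (fun x => v (x, 0))
        ((fderiv ℝ v (p, 0)).comp (ContinuousLinearMap.inl ℝ (ℝ × ℝ × ℝ) ℝ)) p :=
      HasFDerivAt.comp (g := v) (f := fun x => (x, (0:ℝ))) p (hvF p hp 0) (hasFDerivAt_prodMk_left p 0)
    have h3 := h1.unique (h2.congr_of_eventuallyEq (by
      filter_upwards [hΩ.mem_nhds hp] with x hx
      simpa using hper x hx 0))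
    have h4 := congrArg (fun A => A e) h3
    simp only [ContinuousLinearMap.comp_apply, ContinuousLinearMap.inl_apply,
      ContinuousLinearMap.prod_apply, ContinuousLinearMap.id_apply] at h4
    have : ((e, fderiv ℝ Ξ p e) : (ℝ × ℝ × ℝ) × ℝ) = (e, 0) + Ξ' • (0, 1) := by simp [hΞ']
    rw [this, map_add, map_smul, smul_eq_mul] at h4
    exact h4
  have hL0 : L (p, Ξ p) = κ (V p 0) * w (p, 0) ^ 2 := by
    have h := hfirst p hp (Ξ p)
    rw [hdV p hp] at h
    simp only [hL, hv]
    simp only [hV0, hw0] at h ⊢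
    linear_combination -h
  rw [hL0, hV0, hw0] at hFTC
  rw [hw0] at hz0
  linear_combination hFTC + κ (V p 0) * w (p, 0) * hz0

/-- scalar case of Proposition 1: the abbreviated action
`Θ(μ,c,λ) = ∫₀^{Ξ} ( (1/2) κ(v̲)(v̲')² + f(v̲) + (c/(2b)) v̲² + λ v̲ + μ ) dξ`
along a smooth family of non-constant periodic profiles (solving the profile ODE
with potential `W(v;c,λ) = −f(v) − (c/(2b)) v² − λ v` and first integral `μ`) is
smooth, with `∂_μΘ = Ξ`, `∂_cΘ = ∫₀^{Ξ} v̲²/(2b)`, `∂_λΘ = ∫₀^{Ξ} v̲`. -/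
theorem stmt3 (b : ℝ) (hb : b ≠ 0) (f κ : ℝ → ℝ)
    (hf : ContDiff ℝ (⊤ : ℕ∞) f) (hκ : ContDiff ℝ (⊤ : ℕ∞) κ) (hκpos : ∀ v : ℝ, 0 < κ v)
    (Ω : Set (ℝ × ℝ × ℝ)) (hΩ : IsOpen Ω)
    (V : ℝ × ℝ × ℝ → ℝ → ℝ) (Ξ : ℝ × ℝ × ℝ → ℝ)
    (hV : ContDiffOn ℝ (⊤ : ℕ∞) (fun q : (ℝ × ℝ × ℝ) × ℝ => V q.1 q.2) (Ω ×ˢ Set.univ))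
    (hΞsmooth : ContDiffOn ℝ (⊤ : ℕ∞) Ξ Ω) (hΞpos : ∀ p ∈ Ω, 0 < Ξ p)
    (hnc : ∀ p ∈ Ω, ¬ ∃ a : ℝ, ∀ ξ : ℝ, V p ξ = a)
    (hper : ∀ p ∈ Ω, Function.Periodic (V p) (Ξ p))
    (hleast : ∀ p ∈ Ω, ∀ T : ℝ, 0 < T → Function.Periodic (V p) T → Ξ p ≤ T)
    (hODE : ∀ p ∈ Ω, ∀ ξ : ℝ,
      κ (V p ξ) * deriv (deriv (V p)) ξ
        + (1/2) * deriv κ (V p ξ) * (deriv (V p) ξ) ^ 2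
        + (-(deriv f (V p ξ)) - (p.2.1 / b) * V p ξ - p.2.2) = 0)
    (hfirst : ∀ p ∈ Ω, ∀ ξ : ℝ,
      (1/2) * κ (V p ξ) * (deriv (V p) ξ) ^ 2
        + (-(f (V p ξ)) - (p.2.1 / (2*b)) * (V p ξ) ^ 2 - p.2.2 * V p ξ) = p.1) :
    ContDiffOn ℝ (⊤ : ℕ∞)
      (fun p : ℝ × ℝ × ℝ => ∫ ξ in (0:ℝ)..(Ξ p),
        ((1/2) * κ (V p ξ) * (deriv (V p) ξ) ^ 2 + f (V p ξ)
          + (p.2.1 / (2*b)) * (V p ξ) ^ 2 + p.2.2 * V p ξ + p.1)) Ω ∧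
    ∀ p ∈ Ω,
      HasDerivAt (fun μ : ℝ => ∫ ξ in (0:ℝ)..(Ξ (μ, p.2)),
          ((1/2) * κ (V (μ, p.2) ξ) * (deriv (V (μ, p.2)) ξ) ^ 2 + f (V (μ, p.2) ξ)
            + (p.2.1 / (2*b)) * (V (μ, p.2) ξ) ^ 2 + p.2.2 * V (μ, p.2) ξ + μ))
        (Ξ p) p.1 ∧
      HasDerivAt (fun c : ℝ => ∫ ξ in (0:ℝ)..(Ξ (p.1, c, p.2.2)),
          ((1/2) * κ (V (p.1, c, p.2.2) ξ) * (deriv (V (p.1, c, p.2.2)) ξ) ^ 2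
            + f (V (p.1, c, p.2.2) ξ)
            + (c / (2*b)) * (V (p.1, c, p.2.2) ξ) ^ 2
            + p.2.2 * V (p.1, c, p.2.2) ξ + p.1))
        (∫ ξ in (0:ℝ)..(Ξ p), (V p ξ) ^ 2 / (2*b)) p.2.1 ∧
      HasDerivAt (fun l : ℝ => ∫ ξ in (0:ℝ)..(Ξ (p.1, p.2.1, l)),
          ((1/2) * κ (V (p.1, p.2.1, l) ξ) * (deriv (V (p.1, p.2.1, l)) ξ) ^ 2
            + f (V (p.1, p.2.1, l) ξ)
            + (p.2.1 / (2*b)) * (V (p.1, p.2.1, l) ξ) ^ 2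
            + l * V (p.1, p.2.1, l) ξ + p.1))
        (∫ ξ in (0:ℝ)..(Ξ p), V p ξ) p.2.2 := by
  obtain ⟨h1, h2⟩ := aux_main b hb f κ hf hκ Ω hΩ V Ξ hV hΞsmooth hper hODE hfirst
  refine ⟨h1, fun p hp => ⟨?_, ?_, ?_⟩⟩
  · have := h2 p hp (1, 0, 0) (fun t => (t, p.2)) p.1 rfl
      ((hasDerivAt_id _).prodMk (hasDerivAt_const _ _))
    simpa using this
  · have := h2 p hp (0, 1, 0) (fun t => (p.1, t, p.2.2)) p.2.1 rfl
      ((hasDerivAt_const _ _).prodMk ((hasDerivAt_id _).prodMk (hasDerivAt_const _ _)))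
    simpa only [zero_add, one_mul, zero_mul, add_zero] using this
  · have := h2 p hp (0, 0, 1) (fun t => (p.1, p.2.1, t)) p.2.2 rfl
      ((hasDerivAt_const _ _).prodMk ((hasDerivAt_const _ _).prodMk (hasDerivAt_id _)))
    simpa only [zero_add, one_mul, zero_mul, add_zero] using this
end

section
/- For every point p ∈ Ω, the differential at p of the map (μ, c, λ) ↦ (1/∂_μΘ, ∂_cΘ/∂_μΘ, ∇_λΘ/∂_μΘ) is an invertible linear map if and only if the Hessian ∇²Θ(p) is invertible. In particular, this map is a local diffeomorphism on Ω if and only if det ∇²Θ(μ, c, λ) ≠ 0 for all (μ, c, λ) ∈ Ω. -/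
open Matrix

noncomputable section

/-- The state space `ℝ × ℝ × ℝ^N` with coordinates `(μ, c, λ)`
(respectively `(k, α, M)`). -/
abbrev E (N : ℕ) : Type := ℝ × ℝ × (Fin N → ℝ)

/-- Index type for `(N+2) × (N+2)` matrices in `1 + 1 + N` block form. -/
abbrev Idx (N : ℕ) : Type := Fin 1 ⊕ Fin 1 ⊕ Fin N

/-- The standard basis of `ℝ × ℝ × ℝ^N`. -/
def basisVec (N : ℕ) : Idx N → E N :=
  Sum.elim (fun _ => (1, 0, 0))
    (Sum.elim (fun _ => (0, 1, 0)) (fun i => (0, 0, Pi.single i 1)))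

/-- The impulse `Q(M) = (1/2) M · B⁻¹ M`. -/
def Qimp (N : ℕ) (B : Matrix (Fin N) (Fin N) ℝ) (M : Fin N → ℝ) : ℝ :=
  (1/2) * (M ⬝ᵥ B⁻¹.mulVec M)

/-- Partial derivative `∂_μΘ`. -/
def dmu (N : ℕ) (Θ : E N → ℝ) (p : E N) : ℝ := fderiv ℝ Θ p (1, 0, 0)

/-- Partial derivative `∂_cΘ`. -/
def dc (N : ℕ) (Θ : E N → ℝ) (p : E N) : ℝ := fderiv ℝ Θ p (0, 1, 0)

/-- Gradient `∇_λΘ` in the `λ` variables. -/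
def gradlam (N : ℕ) (Θ : E N → ℝ) (p : E N) : Fin N → ℝ :=
  fun i => fderiv ℝ Θ p (0, 0, Pi.single i 1)

/-- Hessian matrix of a function on `ℝ × ℝ × ℝ^N` in the standard basis. -/
def hessMat (N : ℕ) (Θ : E N → ℝ) (p : E N) : Matrix (Idx N) (Idx N) ℝ :=
  Matrix.of fun i j =>
    fderiv ℝ (fun q => fderiv ℝ Θ q (basisVec N j)) p (basisVec N i)

/-- The wavenumber `k = 1/∂_μΘ`. -/
def kfun (N : ℕ) (Θ : E N → ℝ) (p : E N) : ℝ := 1 / dmu N Θ p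

/-- The mean value `M = ∇_λΘ/∂_μΘ`. -/
def Mfun (N : ℕ) (Θ : E N → ℝ) (p : E N) : Fin N → ℝ :=
  (dmu N Θ p)⁻¹ • gradlam N Θ p

/-- The variable `α = ∂_cΘ − ∂_μΘ · Q(∇_λΘ/∂_μΘ)`. -/
def afun (N : ℕ) (B : Matrix (Fin N) (Fin N) ℝ) (Θ : E N → ℝ) (p : E N) : ℝ :=
  dc N Θ p - dmu N Θ p * Qimp N B (Mfun N Θ p)

/-- The map `Φ = (k, α, M)`. -/
def Phi (N : ℕ) (B : Matrix (Fin N) (Fin N) ℝ) (Θ : E N → ℝ) (p : E N) : E N :=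
  (kfun N Θ p, afun N B Θ p, Mfun N Θ p)

/-- `Φ` is a local diffeomorphism at `p`: it is smooth and injective on an open
neighborhood of `p`, its image is open, and it admits a smooth local inverse. -/
def IsLocalDiffeoAt (N : ℕ) (Φ : E N → E N) (p : E N) : Prop :=
  ∃ s : Set (E N), IsOpen s ∧ p ∈ s ∧ ContDiffOn ℝ (⊤ : ℕ∞) Φ s ∧ Set.InjOn Φ s ∧
    IsOpen (Φ '' s) ∧ ∃ Ψ : E N → E N, (∀ x ∈ s, Ψ (Φ x) = x) ∧
      ContDiffOn ℝ (⊤ : ℕ∞) Ψ (Φ '' s)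

end

/-- The linear coordinates on `E N`. -/
def coordFun (N : ℕ) (x : E N) : Idx N → ℝ :=
  Sum.elim (fun _ => x.1) (Sum.elim (fun _ => x.2.1) x.2.2)

theorem coordFun_inj (N : ℕ) : Function.Injective (coordFun N) := by
  intro x y h
  have h0 := congrFun h (Sum.inl 0)
  have h1 := congrFun h (Sum.inr (Sum.inl 0))
  have h2 : ∀ i, x.2.2 i = y.2.2 i := fun i => congrFun h (Sum.inr (Sum.inr i))
  exact Prod.ext h0 (Prod.ext h1 (funext h2))

theorem coordFun_surj (N : ℕ) : Function.Surjective (coordFun N) := by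
  intro f
  refine ⟨(f (Sum.inl 0), f (Sum.inr (Sum.inl 0)), fun i => f (Sum.inr (Sum.inr i))), ?_⟩
  funext i
  rcases i with i | i | i
  · fin_cases i; rfl
  · fin_cases i; rfl
  · rfl

theorem sum_coord (N : ℕ) (x : E N) : ∑ i, coordFun N x i • basisVec N i = x := by
  apply coordFun_inj
  funext j
  rcases j with j | j | j <;>
  simp [coordFun, basisVec, Prod.fst_sum, Prod.snd_sum, Finset.sum_apply, Pi.single_apply]

/-- The gradient map. -/
noncomputable def gradMap (N : ℕ) (Θ : E N → ℝ) (q : E N) : E N := (dmu N Θ q, dc N Θ q, gradlam N Θ q)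

theorem coord_grad (N : ℕ) (Θ : E N → ℝ) (q : E N) (j : Idx N) :
    coordFun N (gradMap N Θ q) j = fderiv ℝ Θ q (basisVec N j) := by
  rcases j with j | j | j <;> rfl

/-- The involution `(a, b, v) ↦ (1/a, b/a, v/a)`. -/
noncomputable def invol (N : ℕ) (x : E N) : E N := (1 / x.1, x.2.1 / x.1, x.1⁻¹ • x.2.2)

theorem invol_invol (N : ℕ) (x : E N) (hx : x.1 ≠ 0) : invol N (invol N x) = x := by
  refine Prod.ext ?_ (Prod.ext ?_ ?_)
  · simp [invol]
  · simp [invol]; field_simp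
  · simp [invol, smul_smul, hx]

theorem contDiffAt_invol (N : ℕ) (x : E N) (hx : x.1 ≠ 0) :
    ContDiffAt ℝ (⊤ : ℕ∞) (invol N) x := by
  unfold invol
  have h1 : ContDiffAt ℝ (⊤ : ℕ∞) (fun x : E N => x.1) x := contDiffAt_fst
  have h2 : ContDiffAt ℝ (⊤ : ℕ∞) (fun x : E N => x.2.1) x := by fun_prop
  have h3 : ContDiffAt ℝ (⊤ : ℕ∞) (fun x : E N => x.2.2) x := by fun_prop
  exact (contDiffAt_const.div h1 hx).prodMk ((h2.div h1 hx).prodMk ((h1.inv hx).smul h3))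

theorem fderiv_invol_inj (N : ℕ) (x : E N) (hx : x.1 ≠ 0) :
    Function.Injective (fderiv ℝ (invol N) x) := by
  have hd : HasFDerivAt (invol N) _ x :=
    ((contDiffAt_invol N x hx).differentiableAt (by simp)).hasFDerivAt
  have hx' : (invol N x).1 ≠ 0 := by simp [invol, hx]
  have hd' : HasFDerivAt (invol N) _ (invol N x) :=
    ((contDiffAt_invol N _ hx').differentiableAt (by simp)).hasFDerivAt
  have hc := hd'.comp x hd
  have hid : HasFDerivAt (invol N ∘ invol N) (ContinuousLinearMap.id ℝ (E N)) x := by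
    refine (hasFDerivAt_id x).congr_of_eventuallyEq ?_
    have : ∀ᶠ y : E N in nhds x, y.1 ≠ 0 := continuous_fst.continuousAt.eventually_ne hx
    filter_upwards [this] with y hy
    exact invol_invol N y hy
  have he := hc.unique hid
  refine Function.LeftInverse.injective (g := fderiv ℝ (invol N) (invol N x)) fun v => ?_
  exact DFunLike.congr_fun he v

theorem bij_iff_inj (N : ℕ) (A : E N →L[ℝ] E N) :
    Function.Bijective A ↔ Function.Injective A :=
  ⟨fun h => h.1, fun h => ⟨h, (LinearMap.injective_iff_surjective (f := (A : E N →ₗ[ℝ] E N))).1 h⟩⟩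

section main
variable {N : ℕ} {Ω : Set (E N)} (hΩ : IsOpen Ω) {Θ : E N → ℝ}
  (hΘ : ContDiffOn ℝ (⊤ : ℕ∞) Θ Ω)

theorem contDiffAt_partial (hΩ : IsOpen Ω) (hΘ : ContDiffOn ℝ (⊤ : ℕ∞) Θ Ω)
    {p : E N} (hp : p ∈ Ω) (v : E N) :
    ContDiffAt ℝ (⊤ : ℕ∞) (fun q => fderiv ℝ Θ q v) p := by
  have h : ContDiffAt ℝ (⊤ : ℕ∞) Θ p := hΘ.contDiffAt (hΩ.mem_nhds hp)
  have h2 : ContDiffAt ℝ (⊤ : ℕ∞) (fderiv ℝ Θ) p := h.fderiv_right (by simp)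
  exact h2.clm_apply contDiffAt_const

theorem contDiffAt_gradMap (hΩ : IsOpen Ω) (hΘ : ContDiffOn ℝ (⊤ : ℕ∞) Θ Ω)
    {p : E N} (hp : p ∈ Ω) : ContDiffAt ℝ (⊤ : ℕ∞) (gradMap N Θ) p :=
  (contDiffAt_partial hΩ hΘ hp _).prodMk ((contDiffAt_partial hΩ hΘ hp _).prodMk
    (contDiffAt_pi.2 fun _ => contDiffAt_partial hΩ hΘ hp _))

theorem coord_fderiv_grad (hΩ : IsOpen Ω) (hΘ : ContDiffOn ℝ (⊤ : ℕ∞) Θ Ω)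
    {p : E N} (hp : p ∈ Ω) (v : E N) :
    coordFun N (fderiv ℝ (gradMap N Θ) p v) = coordFun N v ᵥ* hessMat N Θ p := by
  have hd : ∀ w : E N, HasFDerivAt (fun q => fderiv ℝ Θ q w)
      (fderiv ℝ (fun q => fderiv ℝ Θ q w) p) p := fun w =>
    ((contDiffAt_partial hΩ hΘ hp w).differentiableAt (by simp)).hasFDerivAt
  have hG : HasFDerivAt (gradMap N Θ) _ p :=
    (hd (1, 0, 0)).prodMk ((hd (0, 1, 0)).prodMk
      (hasFDerivAt_pi.2 fun i => hd (0, 0, Pi.single i 1)))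
  have key : ∀ j, coordFun N (fderiv ℝ (gradMap N Θ) p v) j =
      fderiv ℝ (fun q => fderiv ℝ Θ q (basisVec N j)) p v := by
    intro j
    rw [hG.fderiv]
    rcases j with j | j | j <;> rfl
  funext j
  rw [key]
  conv_lhs => rw [← sum_coord N v]
  rw [map_sum]
  simp [Matrix.vecMul, dotProduct, hessMat]

theorem grad_inj_iff (hΩ : IsOpen Ω) (hΘ : ContDiffOn ℝ (⊤ : ℕ∞) Θ Ω)
    {p : E N} (hp : p ∈ Ω) :
    Function.Injective (fderiv ℝ (gradMap N Θ) p) ↔ (hessMat N Θ p).det ≠ 0 := by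
  rw [← isUnit_iff_ne_zero, ← Matrix.isUnit_iff_isUnit_det, ← Matrix.vecMul_injective_iff_isUnit]
  constructor
  · intro h a b hab
    obtain ⟨x, rfl⟩ := coordFun_surj N a
    obtain ⟨y, rfl⟩ := coordFun_surj N b
    simp only [← coord_fderiv_grad hΩ hΘ hp] at hab
    rw [h (coordFun_inj N hab)]
  · intro h x y hxy
    apply coordFun_inj
    apply h
    simp only [← coord_fderiv_grad hΩ hΘ hp, hxy]

theorem inj_iff (hΩ : IsOpen Ω) (hΘ : ContDiffOn ℝ (⊤ : ℕ∞) Θ Ω)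
    {p : E N} (hp : p ∈ Ω) (h0 : dmu N Θ p ≠ 0) :
    Function.Injective (fderiv ℝ (invol N ∘ gradMap N Θ) p) ↔ (hessMat N Θ p).det ≠ 0 := by
  rw [← grad_inj_iff hΩ hΘ hp, fderiv_comp p
    ((contDiffAt_invol N (gradMap N Θ p) h0).differentiableAt (by simp))
    ((contDiffAt_gradMap hΩ hΘ hp).differentiableAt (by simp))]
  rw [ContinuousLinearMap.coe_comp]
  exact (fderiv_invol_inj N (gradMap N Θ p) h0).of_comp_iff _

end main

theorem inj_of_localDiffeo (N : ℕ) (F : E N → E N) (p : E N) (h : IsLocalDiffeoAt N F p) :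
    Function.Injective (fderiv ℝ F p) := by
  obtain ⟨s, hs, hps, hF, -, ho, Ψ, hΨ, hΨs⟩ := h
  have hd : HasFDerivAt F _ p :=
    ((hF.contDiffAt (hs.mem_nhds hps)).differentiableAt (by simp)).hasFDerivAt
  have hd' : HasFDerivAt Ψ _ (F p) :=
    ((hΨs.contDiffAt (ho.mem_nhds (Set.mem_image_of_mem F hps))).differentiableAt
      (by simp)).hasFDerivAt
  have hid : HasFDerivAt (Ψ ∘ F) (ContinuousLinearMap.id ℝ (E N)) p := by
    refine (hasFDerivAt_id p).congr_of_eventuallyEq ?_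
    filter_upwards [hs.mem_nhds hps] with y hy
    exact hΨ y hy
  have he := (hd'.comp p hd).unique hid
  exact Function.LeftInverse.injective (g := fderiv ℝ Ψ (F p)) fun v => DFunLike.congr_fun he v

theorem localDiffeo_of_inj (N : ℕ) (F : E N → E N) (Ω : Set (E N)) (hΩ : IsOpen Ω)
    (hF : ∀ q ∈ Ω, ContDiffAt ℝ (⊤ : ℕ∞) F q)
    (hi : ∀ q ∈ Ω, Function.Injective (fderiv ℝ F q)) (p : E N) (hp : p ∈ Ω) :
    IsLocalDiffeoAt N F p := by
  have hd : ∀ q ∈ Ω, ∃ A : E N ≃L[ℝ] E N, HasFDerivAt F (A : E N →L[ℝ] E N) q := by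
    intro q hq
    let A := (LinearEquiv.ofBijective (fderiv ℝ F q : E N →ₗ[ℝ] E N)
      ((bij_iff_inj N _).2 (hi q hq))).toContinuousLinearEquiv
    refine ⟨A, ?_⟩
    have : (A : E N →L[ℝ] E N) = fderiv ℝ F q := 
      ContinuousLinearMap.ext fun v => rfl
    rw [this]
    exact ((hF q hq).differentiableAt (by simp)).hasFDerivAt
  obtain ⟨A, hA⟩ := hd p hp
  let e := (hF p hp).toOpenPartialHomeomorph F hA (by simp)
  have he : ∀ x, e x = F x := fun x => rfl
  have hpe : p ∈ e.source := (hF p hp).mem_toOpenPartialHomeomorph_source hA (by simp)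
  refine ⟨e.source ∩ Ω, e.open_source.inter hΩ, ⟨hpe, hp⟩,
    fun q hq => (hF q hq.2).contDiffWithinAt, fun x hx y hy hxy => e.injOn hx.1 hy.1 hxy,
    e.isOpen_image_of_subset_source (e.open_source.inter hΩ) Set.inter_subset_left,
    e.symm, fun x hx => e.left_inv hx.1, ?_⟩
  rintro _ ⟨q, hq, rfl⟩
  obtain ⟨A', hA'⟩ := hd q hq.2
  have hs : e.symm (F q) = q := e.left_inv hq.1
  refine (e.contDiffAt_symm (f₀' := A') (e.map_source hq.1) ?_ ?_).contDiffWithinAt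
  · rw [e.left_inv hq.1]; exact hA'
  · rw [e.left_inv hq.1]; exact hF q hq.2

/-- the differential of `(μ,c,λ) ↦ (1/∂_μΘ, ∂_cΘ/∂_μΘ, ∇_λΘ/∂_μΘ)`
is invertible at `p ∈ Ω` iff the Hessian `∇²Θ(p)` is invertible; in particular the
map is a local diffeomorphism on `Ω` iff `det ∇²Θ ≠ 0` on `Ω`. -/
theorem stmt4 (N : ℕ) (hN : 1 ≤ N) (B : Matrix (Fin N) (Fin N) ℝ)
    (hBsymm : B.IsSymm) (hBinv : IsUnit B.det)
    (Ω : Set (E N)) (hΩ : IsOpen Ω)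
    (Θ : E N → ℝ) (hΘ : ContDiffOn ℝ (⊤ : ℕ∞) Θ Ω)
    (hμpos : ∀ p ∈ Ω, 0 < dmu N Θ p) :
    (∀ p ∈ Ω,
      Function.Bijective
        (fderiv ℝ (fun q : E N =>
          ((1 / dmu N Θ q : ℝ), (dc N Θ q / dmu N Θ q : ℝ),
            (dmu N Θ q)⁻¹ • gradlam N Θ q)) p)
        ↔ (hessMat N Θ p).det ≠ 0) ∧
    ((∀ p ∈ Ω, IsLocalDiffeoAt N
        (fun q : E N =>
          ((1 / dmu N Θ q : ℝ), (dc N Θ q / dmu N Θ q : ℝ),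
            (dmu N Θ q)⁻¹ • gradlam N Θ q)) p)
      ↔ (∀ p ∈ Ω, (hessMat N Θ p).det ≠ 0)) := by
  have hEq : (fun q : E N => (((1 / dmu N Θ q : ℝ), (dc N Θ q / dmu N Θ q : ℝ),
      (dmu N Θ q)⁻¹ • gradlam N Θ q) : E N)) = invol N ∘ gradMap N Θ := rfl
  rw [hEq]
  refine ⟨fun p hp => ?_, fun h p hp => ?_, fun h p hp => ?_⟩
  · rw [bij_iff_inj]
    exact inj_iff hΩ hΘ hp (hμpos p hp).ne'
  · exact (inj_iff hΩ hΘ hp (hμpos p hp).ne').1 (inj_of_localDiffeo N _ p (h p hp))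
  · refine localDiffeo_of_inj N _ Ω hΩ (fun q hq => ?_) (fun q hq => ?_) p hp
    · exact (contDiffAt_invol N (gradMap N Θ q) (hμpos q hq).ne').comp q
        (contDiffAt_gradMap hΩ hΘ hq)
    · exact (inj_iff hΩ hΘ hq (hμpos q hq).ne').2 (h q hq)
end

section
/- For every point p ∈ Ω, the differential at p of the map Φ = (k, α, M) is an invertible linear map if and only if the Hessian ∇²Θ(p) is invertible. In particular, Φ is a local diffeomorphism on Ω if and only if det ∇²Θ ≠ 0 everywhere on Ω. -/
open Matrix

noncomputable section

/-- The full gradient map. -/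
def Gmap (N : ℕ) (Θ : E N → ℝ) (p : E N) : E N := (dmu N Θ p, dc N Θ p, gradlam N Θ p)

/-- The outer map with `Φ = T ∘ G`. -/
def Tmap (N : ℕ) (B : Matrix (Fin N) (Fin N) ℝ) (x : E N) : E N :=
  (x.1⁻¹, x.2.1 - x.1 * Qimp N B (x.1⁻¹ • x.2.2), x.1⁻¹ • x.2.2)

/-- The inverse of `T`. -/
def Smap (N : ℕ) (B : Matrix (Fin N) (Fin N) ℝ) (x : E N) : E N :=
  (x.1⁻¹, x.2.1 + x.1⁻¹ * Qimp N B x.2.2, x.1⁻¹ • x.2.2)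

/-- Coordinates. -/
def coordE (N : ℕ) : E N ≃ₗ[ℝ] (Idx N → ℝ) where
  toFun v := Sum.elim (fun _ => v.1) (Sum.elim (fun _ => v.2.1) v.2.2)
  invFun w := (w (Sum.inl 0), w (Sum.inr (Sum.inl 0)), fun i => w (Sum.inr (Sum.inr i)))
  left_inv v := rfl
  right_inv w := by
    ext i
    rcases i with i | i | i
    · simp [Subsingleton.elim i 0]
    · simp [Subsingleton.elim i 0]
    · simp
  map_add' v w := by
    ext i
    rcases i with i | i | i <;> simp
  map_smul' a v := by
    ext i
    rcases i with i | i | i <;> simp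

end

lemma Phi_eq (N : ℕ) (B : Matrix (Fin N) (Fin N) ℝ) (Θ : E N → ℝ) :
    Phi N B Θ = Tmap N B ∘ Gmap N Θ := by
  funext p
  simp [Phi, Tmap, Gmap, kfun, afun, Mfun]

lemma coordE_sum (N : ℕ) (v : E N) : v = ∑ i, coordE N v i • basisVec N i := by
  obtain ⟨a, b, w⟩ := v
  have h1 : ∀ j, coordE N (a, b, w) (Sum.inl j) = a := fun _ => rfl
  have h2 : ∀ j, coordE N (a, b, w) (Sum.inr (Sum.inl j)) = b := fun _ => rfl
  have h3 : ∀ j, coordE N (a, b, w) (Sum.inr (Sum.inr j)) = w j := fun _ => rfl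
  simp only [Fintype.sum_sum_type, h1, h2, h3, basisVec]
  refine Prod.ext ?_ (Prod.ext ?_ ?_)
  · simp [Prod.fst_sum, Prod.snd_sum]
  · simp [Prod.fst_sum, Prod.snd_sum]
  · ext i
    simp [Prod.fst_sum, Prod.snd_sum, Finset.sum_apply, Pi.single_apply]

lemma contDiff_Q (N : ℕ) (B : Matrix (Fin N) (Fin N) ℝ) :
    ContDiff ℝ (⊤ : ℕ∞) (Qimp N B) := by
  unfold Qimp
  simp only [dotProduct, mulVec]
  fun_prop

lemma contDiffAt_T (N : ℕ) (B : Matrix (Fin N) (Fin N) ℝ) (x : E N) (hx : x.1 ≠ 0) :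
    ContDiffAt ℝ (⊤ : ℕ∞) (Tmap N B) x := by
  have h1 : ContDiffAt ℝ (⊤ : ℕ∞) (fun x : E N => x.1⁻¹) x := contDiffAt_fst.inv hx
  have h2 : ContDiffAt ℝ (⊤ : ℕ∞) (fun x : E N => x.1⁻¹ • x.2.2) x :=
    h1.smul (by fun_prop)
  have h3 := (contDiff_Q N B).contDiffAt.comp x h2
  exact h1.prodMk ((ContDiffAt.sub (by fun_prop) (contDiffAt_fst.mul h3)).prodMk h2)

lemma contDiffAt_S (N : ℕ) (B : Matrix (Fin N) (Fin N) ℝ) (x : E N) (hx : x.1 ≠ 0) :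
    ContDiffAt ℝ (⊤ : ℕ∞) (Smap N B) x := by
  have h1 : ContDiffAt ℝ (⊤ : ℕ∞) (fun x : E N => x.1⁻¹) x := contDiffAt_fst.inv hx
  have h2 : ContDiffAt ℝ (⊤ : ℕ∞) (fun x : E N => x.1⁻¹ • x.2.2) x :=
    h1.smul (by fun_prop)
  have h3 : ContDiffAt ℝ (⊤ : ℕ∞) (fun x : E N => Qimp N B x.2.2) x :=
    (contDiff_Q N B).contDiffAt.comp x (by fun_prop)
  exact h1.prodMk ((ContDiffAt.add (by fun_prop) (h1.mul h3)).prodMk h2)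

lemma S_T (N : ℕ) (B : Matrix (Fin N) (Fin N) ℝ) (x : E N) (hx : x.1 ≠ 0) :
    Smap N B (Tmap N B x) = x := by
  simp [Smap, Tmap, smul_smul, hx]

/-- A map with a differentiable local left inverse has bijective derivative. -/
lemma bij_of_leftInv (N : ℕ) (f g : E N → E N) (x : E N)
    (hf : DifferentiableAt ℝ f x) (hg : DifferentiableAt ℝ g (f x))
    (h : ∀ᶠ y in nhds x, g (f y) = y) : Function.Bijective (fderiv ℝ f x) := by
  have h1 : fderiv ℝ (g ∘ f) x = ContinuousLinearMap.id ℝ (E N) := by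
    rw [Filter.EventuallyEq.fderiv_eq (f := id) (by exact h), fderiv_id]
  rw [fderiv_comp x hg hf] at h1
  have hinj : Function.Injective (fderiv ℝ f x) := by
    intro a b hab
    have ha := congrArg (fun L : E N →L[ℝ] E N => L a) h1
    have hb := congrArg (fun L : E N →L[ℝ] E N => L b) h1
    simp only [ContinuousLinearMap.comp_apply, ContinuousLinearMap.id_apply] at ha hb
    rw [← ha, ← hb, hab]
  exact ⟨hinj, (LinearMap.injective_iff_surjective
    (f := (fderiv ℝ f x : E N →ₗ[ℝ] E N))).1 hinj⟩

lemma bij_T (N : ℕ) (B : Matrix (Fin N) (Fin N) ℝ) (x : E N) (hx : x.1 ≠ 0) :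
    Function.Bijective (fderiv ℝ (Tmap N B) x) := by
  refine bij_of_leftInv N _ (Smap N B) x ((contDiffAt_T N B x hx).differentiableAt (by simp))
    ((contDiffAt_S N B _ (by simpa [Tmap] using hx)).differentiableAt (by simp)) ?_
  have : ∀ᶠ y : E N in nhds x, y.1 ≠ 0 := continuousAt_fst.eventually_ne hx
  filter_upwards [this] with y hy using S_T N B y hy

lemma contDiffOn_dir (N : ℕ) (Ω : Set (E N)) (hΩ : IsOpen Ω)
    (Θ : E N → ℝ) (hΘ : ContDiffOn ℝ (⊤ : ℕ∞) Θ Ω) (v : E N) :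
    ContDiffOn ℝ (⊤ : ℕ∞) (fun q => fderiv ℝ Θ q v) Ω :=
  (hΘ.fderiv_of_isOpen hΩ (by simp)).clm_apply contDiffOn_const

lemma contDiffOn_G (N : ℕ) (Ω : Set (E N)) (hΩ : IsOpen Ω)
    (Θ : E N → ℝ) (hΘ : ContDiffOn ℝ (⊤ : ℕ∞) Θ Ω) :
    ContDiffOn ℝ (⊤ : ℕ∞) (Gmap N Θ) Ω :=
  (contDiffOn_dir N Ω hΩ Θ hΘ _).prodMk ((contDiffOn_dir N Ω hΩ Θ hΘ _).prodMk
    (contDiffOn_pi.2 fun _ => contDiffOn_dir N Ω hΩ Θ hΘ _))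

lemma coord_G (N : ℕ) (Θ : E N → ℝ) (q : E N) (j : Idx N) :
    coordE N (Gmap N Θ q) j = fderiv ℝ Θ q (basisVec N j) := by
  rcases j with j | j | j <;> rfl

lemma coord_fderiv_G (N : ℕ) (Ω : Set (E N)) (hΩ : IsOpen Ω)
    (Θ : E N → ℝ) (hΘ : ContDiffOn ℝ (⊤ : ℕ∞) Θ Ω) (p : E N) (hp : p ∈ Ω) (v : E N) :
    coordE N (fderiv ℝ (Gmap N Θ) p v) = coordE N v ᵥ* hessMat N Θ p := by
  have hG : DifferentiableAt ℝ (Gmap N Θ) p :=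
    ((contDiffOn_G N Ω hΩ Θ hΘ).contDiffAt (hΩ.mem_nhds hp)).differentiableAt (by simp)
  ext j
  let L : E N →L[ℝ] ℝ :=
    LinearMap.toContinuousLinearMap ((LinearMap.proj j).comp (coordE N).toLinearMap)
  have hL : ∀ w, L w = coordE N w j := fun w => rfl
  have h1 : fderiv ℝ (fun q => fderiv ℝ Θ q (basisVec N j)) p = L.comp (fderiv ℝ (Gmap N Θ) p) := by
    have h2 : (fun q => fderiv ℝ Θ q (basisVec N j)) = fun q => L (Gmap N Θ q) := by
      funext q
      rw [hL, coord_G]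
    rw [h2]
    exact (L.hasFDerivAt.comp p hG.hasFDerivAt).fderiv
  rw [← hL, ← ContinuousLinearMap.comp_apply, ← h1]
  conv_lhs => rw [coordE_sum N v]
  rw [map_sum]
  simp [vecMul, dotProduct, hessMat]

lemma bij_G (N : ℕ) (Ω : Set (E N)) (hΩ : IsOpen Ω)
    (Θ : E N → ℝ) (hΘ : ContDiffOn ℝ (⊤ : ℕ∞) Θ Ω) (p : E N) (hp : p ∈ Ω) :
    Function.Bijective (fderiv ℝ (Gmap N Θ) p) ↔ (hessMat N Θ p).det ≠ 0 := by
  rw [← isUnit_iff_ne_zero, ← Matrix.isUnit_iff_isUnit_det, ← Matrix.vecMul_injective_iff_isUnit]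
  have h1 : coordE N ∘ fderiv ℝ (Gmap N Θ) p
      = (fun v => v ᵥ* hessMat N Θ p) ∘ coordE N := by
    funext v
    exact coord_fderiv_G N Ω hΩ Θ hΘ p hp v
  have h2 : Function.Bijective (fderiv ℝ (Gmap N Θ) p)
      ↔ Function.Injective (fderiv ℝ (Gmap N Θ) p) :=
    ⟨fun h => h.1, fun h => ⟨h, (LinearMap.injective_iff_surjective
      (f := (fderiv ℝ (Gmap N Θ) p : E N →ₗ[ℝ] E N))).1 h⟩⟩
  rw [h2, ← (coordE N).injective.of_comp_iff, h1]
  exact Function.Injective.of_comp_iff' _ (coordE N).bijective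

lemma contDiffAt_Phi (N : ℕ) (B : Matrix (Fin N) (Fin N) ℝ) (Ω : Set (E N)) (hΩ : IsOpen Ω)
    (Θ : E N → ℝ) (hΘ : ContDiffOn ℝ (⊤ : ℕ∞) Θ Ω)
    (hμpos : ∀ p ∈ Ω, 0 < dmu N Θ p) (p : E N) (hp : p ∈ Ω) :
    ContDiffAt ℝ (⊤ : ℕ∞) (Phi N B Θ) p := by
  rw [Phi_eq]
  exact (contDiffAt_T N B _ (hμpos p hp).ne').comp p
    ((contDiffOn_G N Ω hΩ Θ hΘ).contDiffAt (hΩ.mem_nhds hp))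

lemma bij_Phi (N : ℕ) (B : Matrix (Fin N) (Fin N) ℝ) (Ω : Set (E N)) (hΩ : IsOpen Ω)
    (Θ : E N → ℝ) (hΘ : ContDiffOn ℝ (⊤ : ℕ∞) Θ Ω)
    (hμpos : ∀ p ∈ Ω, 0 < dmu N Θ p) (p : E N) (hp : p ∈ Ω) :
    Function.Bijective (fderiv ℝ (Phi N B Θ) p) ↔ (hessMat N Θ p).det ≠ 0 := by
  have hne : (Gmap N Θ p).1 ≠ 0 := (hμpos p hp).ne'
  rw [← bij_G N Ω hΩ Θ hΘ p hp, Phi_eq, fderiv_comp p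
    ((contDiffAt_T N B _ hne).differentiableAt (by simp))
    (((contDiffOn_G N Ω hΩ Θ hΘ).contDiffAt (hΩ.mem_nhds hp)).differentiableAt (by simp)),
    ContinuousLinearMap.coe_comp]
  exact Function.Bijective.of_comp_iff' (bij_T N B _ hne) _

lemma localDiffeo_of (N : ℕ) (f : E N → E N) (Ω : Set (E N)) (hΩ : IsOpen Ω)
    (hf : ∀ p ∈ Ω, ContDiffAt ℝ (⊤ : ℕ∞) f p)
    (hb : ∀ p ∈ Ω, Function.Bijective (fderiv ℝ f p)) (p : E N) (hp : p ∈ Ω) :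
    IsLocalDiffeoAt N f p := by
  have key : ∀ q ∈ Ω, ∃ f' : E N ≃L[ℝ] E N, HasFDerivAt f (f' : E N →L[ℝ] E N) q := by
    intro q hq
    refine ⟨(LinearEquiv.ofBijective (fderiv ℝ f q : E N →ₗ[ℝ] E N)
      (hb q hq)).toContinuousLinearEquiv, ?_⟩
    have := ((hf q hq).differentiableAt (by simp)).hasFDerivAt
    exact this.congr_fderiv (ContinuousLinearMap.ext fun v => rfl)
  obtain ⟨f', hf'⟩ := key p hp
  let e := (hf p hp).toOpenPartialHomeomorph f hf' (by simp)
  have hcoe : (e : E N → E N) = f := (hf p hp).toOpenPartialHomeomorph_coe hf' (by simp)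
  have hpe : p ∈ e.source := (hf p hp).mem_toOpenPartialHomeomorph_source hf' (by simp)
  refine ⟨e.source ∩ Ω, e.open_source.inter hΩ, ⟨hpe, hp⟩,
    fun q hq => (hf q hq.2).contDiffWithinAt, ?_, ?_, e.symm, ?_, ?_⟩
  · rw [← hcoe]
    exact e.injOn.mono Set.inter_subset_left
  · rw [← hcoe]
    exact e.isOpen_image_of_subset_source (e.open_source.inter hΩ) Set.inter_subset_left
  · intro x hx
    rw [← hcoe]
    exact e.left_inv hx.1
  · rintro _ ⟨x, hx, rfl⟩
    obtain ⟨g', hg'⟩ := key x hx.2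
    have h1 : e.symm (f x) = x := by
      rw [← hcoe]
      exact e.left_inv hx.1
    have h2 : f x ∈ e.target := by
      rw [← hcoe]
      exact e.map_source hx.1
    refine (e.contDiffAt_symm (f₀' := g') h2 ?_ ?_).contDiffWithinAt
    · rw [h1, hcoe]
      exact hg'
    · rw [h1, hcoe]
      exact hf x hx.2

/-- the differential of `Φ = (k, α, M)` is invertible at `p ∈ Ω` iff
the Hessian `∇²Θ(p)` is invertible; in particular `Φ` is a local diffeomorphism on
`Ω` iff `det ∇²Θ ≠ 0` everywhere on `Ω`. -/
theorem stmt5 (N : ℕ) (hN : 1 ≤ N) (B : Matrix (Fin N) (Fin N) ℝ)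
    (hBsymm : B.IsSymm) (hBinv : IsUnit B.det)
    (Ω : Set (E N)) (hΩ : IsOpen Ω)
    (Θ : E N → ℝ) (hΘ : ContDiffOn ℝ (⊤ : ℕ∞) Θ Ω)
    (hμpos : ∀ p ∈ Ω, 0 < dmu N Θ p) :
    (∀ p ∈ Ω,
      Function.Bijective (fderiv ℝ (Phi N B Θ) p) ↔ (hessMat N Θ p).det ≠ 0) ∧
    ((∀ p ∈ Ω, IsLocalDiffeoAt N (Phi N B Θ) p)
      ↔ (∀ p ∈ Ω, (hessMat N Θ p).det ≠ 0)) := by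
  have h1 := bij_Phi N B Ω hΩ Θ hΘ hμpos
  have h2 := contDiffAt_Phi N B Ω hΩ Θ hΘ hμpos
  refine ⟨h1, ?_, ?_⟩
  · intro h p hp
    rw [← h1 p hp]
    obtain ⟨s, hs, hps, -, -, ho, Ψ, hΨ, hΨs⟩ := h p hp
    refine bij_of_leftInv N _ Ψ p ((h2 p hp).differentiableAt (by simp))
      ((hΨs.contDiffAt (ho.mem_nhds (Set.mem_image_of_mem _ hps))).differentiableAt (by simp)) ?_
    filter_upwards [hs.mem_nhds hps] with y hy using hΨ y hy
  · intro h p hp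
    exact localDiffeo_of N _ Ω hΩ h2 (fun q hq => (h1 q hq).2 (h q hq)) p hp
end

section
/- Assume ∇²Θ(p) is invertible at a point p = (μ, c, λ) ∈ Ω. Then there is an open neighborhood of p on which Φ is a diffeomorphism onto its image, and the function h := H ∘ Φ⁻¹ of the variables (k, α, M) satisfies, at the point Φ(p): ∂_k h = Θ(p) − α(p) c, ∂_α h = −k(p) c, and ∇_M h = −c B⁻¹ M(p) − λ. -/
open Matrix

open Matrix in
/-- The averaged Hamiltonian `H = k (Θ − μ ∂_μΘ − c ∂_cΘ − λ·∇_λΘ)`. -/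
noncomputable def Hav (N : ℕ) (Θ : E N → ℝ) (p : E N) : ℝ :=
  kfun N Θ p * (Θ p - p.1 * dmu N Θ p - p.2.1 * dc N Θ p - p.2.2 ⬝ᵥ gradlam N Θ p)

open Filter Topology

lemma inv_fun_aux {F : Type*} [NormedAddCommGroup F] [NormedSpace ℝ F] [FiniteDimensional ℝ F]
    (f : F → F) (Ω : Set F) (hΩ : IsOpen Ω) (hf : ContDiffOn ℝ (⊤ : ℕ∞) f Ω) (p : F) (hp : p ∈ Ω)
    (hinj : ∀ v, fderiv ℝ f p v = 0 → v = 0) :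
    ∃ s : Set F, IsOpen s ∧ p ∈ s ∧ s ⊆ Ω ∧ Set.InjOn f s ∧ IsOpen (f '' s) ∧
      ∃ g : F → F, (∀ x ∈ s, g (f x) = x) ∧ ContDiffOn ℝ (⊤ : ℕ∞) g (f '' s) := by
  have : CompleteSpace F := FiniteDimensional.complete ℝ F
  have hat : ∀ x ∈ Ω, ContDiffAt ℝ (⊤ : ℕ∞) f x := fun x hx => hf.contDiffAt (hΩ.mem_nhds hx)
  have hinj' : Function.Injective (fderiv ℝ f p : F →ₗ[ℝ] F) := by
    rw [injective_iff_map_eq_zero]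
    exact hinj
  let L : F ≃L[ℝ] F := (LinearEquiv.ofInjectiveEndo _ hinj').toContinuousLinearEquiv
  have hL : (L : F →L[ℝ] F) = fderiv ℝ f p := by
    ext v; rfl
  have hne : ((⊤ : ℕ∞) : WithTop ℕ∞) ≠ 0 := by simp
  have hd : HasFDerivAt f (L : F →L[ℝ] F) p := by
    rw [hL]; exact ((hat p hp).differentiableAt hne).hasFDerivAt
  have hcont : ContinuousOn (fderiv ℝ f) Ω := hf.continuousOn_fderiv_of_isOpen hΩ (by simp)
  have hev : ∀ᶠ x in 𝓝 p, fderiv ℝ f x ∈ Set.range ((↑) : (F ≃L[ℝ] F) → F →L[ℝ] F) := by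
    have h1 := (hcont.continuousAt (hΩ.mem_nhds hp))
    apply h1
    rw [← hL]
    exact L.nhds
  obtain ⟨U, hU, hUo, hpU⟩ := eventually_nhds_iff.1 hev
  let e := (hat p hp).toOpenPartialHomeomorph f hd hne
  have he : (e : F → F) = f := rfl
  have hpe : p ∈ e.source := (hat p hp).mem_toOpenPartialHomeomorph_source hd hne
  refine ⟨e.source ∩ (U ∩ Ω), e.open_source.inter (hUo.inter hΩ), ⟨hpe, hpU, hp⟩,
    fun x hx => hx.2.2, fun x hx y hy h => e.injOn hx.1 hy.1 h,
    e.isOpen_image_of_subset_source (e.open_source.inter (hUo.inter hΩ)) Set.inter_subset_left,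
    e.symm, fun x hx => e.left_inv hx.1, ?_⟩
  rintro _ ⟨x, hx, rfl⟩
  apply ContDiffAt.contDiffWithinAt
  obtain ⟨A, hA⟩ := hU x hx.2.1
  have hx' : e.symm (f x) = x := e.left_inv hx.1
  refine e.contDiffAt_symm (f₀' := A) (e.map_source hx.1) ?_ ?_
  · rw [hx', hA]
    exact ((hat x hx.2.2).differentiableAt hne).hasFDerivAt
  · rw [hx']; exact hat x hx.2.2

lemma hasDerivAt_dot {N : ℕ} {f g : ℝ → Fin N → ℝ} {f' g' : Fin N → ℝ} {x : ℝ}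
    (hf : HasDerivAt f f' x) (hg : HasDerivAt g g' x) :
    HasDerivAt (fun t => f t ⬝ᵥ g t) (f' ⬝ᵥ g x + f x ⬝ᵥ g') x := by
  rw [hasDerivAt_pi] at hf hg
  simp only [dotProduct, ← Finset.sum_add_distrib]
  exact HasDerivAt.fun_sum fun i _ => (hf i).mul (hg i)

lemma hasDerivAt_mulVec {N : ℕ} (A : Matrix (Fin N) (Fin N) ℝ) {f : ℝ → Fin N → ℝ}
    {f' : Fin N → ℝ} {x : ℝ} (hf : HasDerivAt f f' x) :
    HasDerivAt (fun t => A.mulVec (f t)) (A.mulVec f') x := by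
  have := (LinearMap.toContinuousLinearMap (Matrix.mulVecLin A)).hasFDerivAt.comp_hasDerivAt x hf
  exact this

lemma hasDerivAt_Q {N : ℕ} (B : Matrix (Fin N) (Fin N) ℝ) (hB : B.IsSymm) {f : ℝ → Fin N → ℝ}
    {f' : Fin N → ℝ} {x : ℝ} (hf : HasDerivAt f f' x) :
    HasDerivAt (fun t => Qimp N B (f t)) (f' ⬝ᵥ B⁻¹.mulVec (f x)) x := by
  have h := (hasDerivAt_dot hf (hasDerivAt_mulVec B⁻¹ hf)).const_mul (1/2 : ℝ)
  have hs : f x ⬝ᵥ B⁻¹.mulVec f' = f' ⬝ᵥ B⁻¹.mulVec (f x) := by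
    have hT : (B⁻¹)ᵀ = B⁻¹ := by rw [Matrix.transpose_nonsing_inv, hB.eq]
    rw [Matrix.dotProduct_mulVec, ← Matrix.mulVec_transpose, hT, dotProduct_comm]
  rw [hs] at h
  have e : f' ⬝ᵥ B⁻¹.mulVec (f x) =
      1 / 2 * (f' ⬝ᵥ B⁻¹.mulVec (f x) + f' ⬝ᵥ B⁻¹.mulVec (f x)) := by ring
  rw [e]
  exact h

lemma hasDerivAt_line {V G : Type*} [NormedAddCommGroup V] [NormedSpace ℝ V]
    [NormedAddCommGroup G] [NormedSpace ℝ G] {f : V → G} {p : V}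
    (hf : DifferentiableAt ℝ f p) (v : V) :
    HasDerivAt (fun t : ℝ => f (p + t • v)) (fderiv ℝ f p v) 0 :=
  hf.hasFDerivAt.hasLineDerivAt v

lemma sum_basis (N : ℕ) (v : E N) :
    v = v.1 • ((1, 0, 0) : E N) + v.2.1 • ((0, 1, 0) : E N)
      + ∑ i, v.2.2 i • ((0, 0, Pi.single i 1) : E N) := by
  obtain ⟨a, b, m⟩ := v
  refine Prod.ext ?_ (Prod.ext ?_ ?_)
  · simp [Prod.fst_sum]
  · simp [Prod.fst_sum, Prod.snd_sum]
  · ext j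
    simp [Prod.snd_sum, Pi.single_apply]

lemma lin_decomp (N : ℕ) (L : E N →L[ℝ] ℝ) (v : E N) :
    L v = v.1 * L (1, 0, 0) + v.2.1 * L (0, 1, 0)
      + v.2.2 ⬝ᵥ fun i => L (0, 0, Pi.single i 1) := by
  conv_lhs => rw [sum_basis N v]
  simp only [map_add, map_sum, map_smul, smul_eq_mul, dotProduct]

lemma hess_inj (N : ℕ) (Θ : E N → ℝ) (p : E N) (hhess : IsUnit (hessMat N Θ p).det) (v : E N)
    (hv : ∀ j, fderiv ℝ (fun q => fderiv ℝ Θ q (basisVec N j)) p v = 0) : v = 0 := by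
  let w : Idx N → ℝ := Sum.elim (fun _ => v.1) (Sum.elim (fun _ => v.2.1) v.2.2)
  have hw : w ᵥ* hessMat N Θ p = 0 := by
    ext j
    have := hv j
    rw [lin_decomp] at this
    simp only [Matrix.vecMul, dotProduct, hessMat, Matrix.of_apply, Fintype.sum_sum_type,
      Finset.univ_unique, Finset.sum_singleton, w, Sum.elim_inl, Sum.elim_inr, Pi.zero_apply]
    rw [← this]
    simp only [basisVec, Sum.elim_inl, Sum.elim_inr, dotProduct]
    ring
  have h0 := Matrix.eq_zero_of_vecMul_eq_zero hhess.ne_zero hw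
  refine Prod.ext ?_ (Prod.ext ?_ ?_)
  · exact congrFun h0 (Sum.inl 0)
  · exact congrFun h0 (Sum.inr (Sum.inl 0))
  · ext i
    exact congrFun h0 (Sum.inr (Sum.inr i))

open Matrix in
/-- if `∇²Θ(p)` is invertible, then `Φ = (k,α,M)` is a diffeomorphism
onto its image on a neighborhood of `p`, and `h = H ∘ Φ⁻¹` satisfies, at `Φ(p)`:
`∂_k h = Θ(p) − α(p) c`, `∂_α h = −k(p) c`, `∇_M h = −c B⁻¹ M(p) − λ`. -/
theorem stmt6 (N : ℕ) (hN : 1 ≤ N) (B : Matrix (Fin N) (Fin N) ℝ)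
    (hBsymm : B.IsSymm) (hBinv : IsUnit B.det)
    (Ω : Set (E N)) (hΩ : IsOpen Ω)
    (Θ : E N → ℝ) (hΘ : ContDiffOn ℝ (⊤ : ℕ∞) Θ Ω)
    (hμpos : ∀ p ∈ Ω, 0 < dmu N Θ p)
    (p : E N) (hp : p ∈ Ω) (hhess : IsUnit (hessMat N Θ p).det) :
    ∃ s : Set (E N), IsOpen s ∧ p ∈ s ∧ s ⊆ Ω ∧
      ContDiffOn ℝ (⊤ : ℕ∞) (Phi N B Θ) s ∧ Set.InjOn (Phi N B Θ) s ∧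
      IsOpen (Phi N B Θ '' s) ∧
      ∃ Ψ : E N → E N, (∀ x ∈ s, Ψ (Phi N B Θ x) = x) ∧
        ContDiffOn ℝ (⊤ : ℕ∞) Ψ (Phi N B Θ '' s) ∧
        fderiv ℝ (Hav N Θ ∘ Ψ) (Phi N B Θ p) (1, 0, 0)
          = Θ p - afun N B Θ p * p.2.1 ∧
        fderiv ℝ (Hav N Θ ∘ Ψ) (Phi N B Θ p) (0, 1, 0)
          = -(kfun N Θ p * p.2.1) ∧
        (fun i => fderiv ℝ (Hav N Θ ∘ Ψ) (Phi N B Θ p) (0, 0, Pi.single i 1))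
          = -p.2.1 • B⁻¹.mulVec (Mfun N Θ p) - p.2.2 := by
  have hne : ((⊤ : ℕ∞) : WithTop ℕ∞) ≠ 0 := by simp
  have hfd : ContDiffOn ℝ (⊤ : ℕ∞) (fderiv ℝ Θ) Ω :=
    hΘ.fderiv_of_isOpen hΩ (by simp)
  have hdir : ∀ w : E N, ContDiffOn ℝ (⊤ : ℕ∞) (fun q => fderiv ℝ Θ q w) Ω :=
    fun w => hfd.clm_apply contDiffOn_const
  have hmu : ContDiffOn ℝ (⊤ : ℕ∞) (dmu N Θ) Ω := hdir _
  have hdc : ContDiffOn ℝ (⊤ : ℕ∞) (dc N Θ) Ω := hdir _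
  have hgr : ContDiffOn ℝ (⊤ : ℕ∞) (gradlam N Θ) Ω := contDiffOn_pi.2 fun i => hdir _
  have hk : ContDiffOn ℝ (⊤ : ℕ∞) (kfun N Θ) Ω :=
    contDiffOn_const.div hmu fun x hx => (hμpos x hx).ne'
  have hM : ContDiffOn ℝ (⊤ : ℕ∞) (Mfun N Θ) Ω :=
    (hmu.inv fun x hx => (hμpos x hx).ne').smul hgr
  have hMi : ∀ i, ContDiffOn ℝ (⊤ : ℕ∞) (fun q => Mfun N Θ q i) Ω := contDiffOn_pi.1 hM
  have hQ : ContDiffOn ℝ (⊤ : ℕ∞) (fun q => Qimp N B (Mfun N Θ q)) Ω := by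
    simp only [Qimp, dotProduct, Matrix.mulVec]
    exact contDiffOn_const.mul (ContDiffOn.sum fun i _ => (hMi i).mul
      (ContDiffOn.sum fun j _ => contDiffOn_const.mul (hMi j)))
  have ha : ContDiffOn ℝ (⊤ : ℕ∞) (afun N B Θ) Ω := hdc.sub (hmu.mul hQ)
  have hΦ : ContDiffOn ℝ (⊤ : ℕ∞) (Phi N B Θ) Ω := hk.prodMk (ha.prodMk hM)
  have hH : ContDiffOn ℝ (⊤ : ℕ∞) (Hav N Θ) Ω := by
    have h1 : ContDiffOn ℝ (⊤ : ℕ∞) (fun q : E N => q.2.2 ⬝ᵥ gradlam N Θ q) Ω := by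
      simp only [dotProduct]
      refine ContDiffOn.sum fun i _ => ContDiffOn.mul ?_ (hdir _)
      exact ContDiff.contDiffOn (by fun_prop)
    exact hk.mul (((hΘ.sub (contDiffOn_fst.mul hmu)).sub
      ((ContDiff.contDiffOn (by fun_prop)).mul hdc)).sub h1)
  have dif : ∀ {G : Type} [NormedAddCommGroup G] [NormedSpace ℝ G] {f : E N → G},
      ContDiffOn ℝ (⊤ : ℕ∞) f Ω → DifferentiableAt ℝ f p := fun h =>
    (h.contDiffAt (hΩ.mem_nhds hp)).differentiableAt hne
  have hline : ∀ v : E N, ∀ᶠ t : ℝ in 𝓝 0, p + t • v ∈ Ω := by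
    intro v
    have hc : ContinuousAt (fun t : ℝ => p + t • v) 0 := by fun_prop
    apply hc
    simpa using hΩ.mem_nhds hp
  have hDΦ : ∀ v, fderiv ℝ (Phi N B Θ) p v =
      (fderiv ℝ (kfun N Θ) p v, fderiv ℝ (afun N B Θ) p v, fderiv ℝ (Mfun N Θ) p v) := by
    intro v
    have := ((dif hk).hasFDerivAt.prodMk ((dif ha).hasFDerivAt.prodMk (dif hM).hasFDerivAt)).fderiv
    change fderiv ℝ (Phi N B Θ) p = _ at this
    rw [this]; rfl
  have hp0 := (hμpos p hp).ne'
  have hinj : ∀ v, fderiv ℝ (Phi N B Θ) p v = 0 → v = 0 := by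
    intro v hv
    rw [hDΦ] at hv
    obtain ⟨hv1, hv2⟩ := Prod.ext_iff.1 hv
    obtain ⟨hv2, hv3⟩ := Prod.ext_iff.1 hv2
    simp only [Prod.fst_zero, Prod.snd_zero] at hv1 hv2 hv3
    have dk := hasDerivAt_line (dif hk) v
    have da := hasDerivAt_line (dif ha) v
    have dM := hasDerivAt_line (dif hM) v
    rw [hv1] at dk
    rw [hv2] at da
    rw [hv3] at dM
    have dQ := hasDerivAt_Q B hBsymm dM
    have dmu1 : HasDerivAt (fun t : ℝ => dmu N Θ (p + t • v)) 0 0 := by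
      have := dk.inv (by simp [kfun, hp0])
      simpa [kfun, Pi.inv_def] using this
    have dg : HasDerivAt (fun t : ℝ => gradlam N Θ (p + t • v)) 0 0 := by
      have := dmu1.smul dM
      simp only [smul_zero, zero_smul, add_zero] at this
      refine this.congr_of_eventuallyEq ?_
      filter_upwards [hline v] with t ht
      simp [Mfun, smul_smul, mul_inv_cancel₀ (hμpos _ ht).ne']
    have ddc : HasDerivAt (fun t : ℝ => dc N Θ (p + t • v)) 0 0 := by
      have := da.add (dmu1.mul dQ)
      simp only [zero_dotProduct, mul_zero, zero_mul, add_zero] at this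
      refine this.congr_of_eventuallyEq ?_
      filter_upwards with t
      simp [afun]
    apply hess_inj N Θ p hhess
    intro j
    have key := hasDerivAt_line (dif (hdir (basisVec N j))) v
    refine key.unique ?_
    rcases j with j | j | j
    · exact dmu1
    · exact ddc
    · exact (hasDerivAt_pi.1 dg) j
  have hDH : ∀ v, fderiv ℝ (Hav N Θ) p v =
      (Θ p - afun N B Θ p * p.2.1) * fderiv ℝ (kfun N Θ) p v
      - kfun N Θ p * p.2.1 * fderiv ℝ (afun N B Θ) p v
      + fderiv ℝ (Mfun N Θ) p v ⬝ᵥ (-p.2.1 • B⁻¹.mulVec (Mfun N Θ p) - p.2.2) := by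
    intro v
    have dk := hasDerivAt_line (dif hk) v
    have da := hasDerivAt_line (dif ha) v
    have dM := hasDerivAt_line (dif hM) v
    have dT := hasDerivAt_line (dif hΘ) v
    have dQ := hasDerivAt_Q B hBsymm dM
    have dl : HasDerivAt (fun t : ℝ => p + t • v) v 0 := by
      simpa using ((hasDerivAt_id (0:ℝ)).smul_const v).const_add p
    have d1 : HasDerivAt (fun t : ℝ => (p + t • v).1) v.1 0 := dl.fst
    have d2 : HasDerivAt (fun t : ℝ => (p + t • v).2.1) v.2.1 0 := dl.snd.fst
    have d3 : HasDerivAt (fun t : ℝ => (p + t • v).2.2) v.2.2 0 := dl.snd.snd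
    have tot := (((dk.mul dT).sub d1).sub (d2.mul ((dk.mul da).add dQ))).sub (hasDerivAt_dot d3 dM)
    have dH := hasDerivAt_line (dif hH) v
    have tot' := tot.congr_of_eventuallyEq (f₁ := fun t : ℝ => Hav N Θ (p + t • v)) (by
      filter_upwards [hline v] with t ht
      have h0 := (hμpos _ ht).ne'
      have : Hav N Θ (p + t • v) = kfun N Θ (p + t • v) * Θ (p + t • v) - (p + t • v).1
          - (p + t • v).2.1 * (kfun N Θ (p + t • v) * afun N B Θ (p + t • v)
            + Qimp N B (Mfun N Θ (p + t • v))) - (p + t • v).2.2 ⬝ᵥ Mfun N Θ (p + t • v) := by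
        generalize p + t • v = q at h0
        have e1 : q.2.2 ⬝ᵥ Mfun N Θ q = (dmu N Θ q)⁻¹ * (q.2.2 ⬝ᵥ gradlam N Θ q) := by
          simp [Mfun, dotProduct_smul]
        rw [e1]
        simp only [Hav, afun, kfun]
        field_simp
        ring
      exact this)
    rw [dH.unique tot']
    have hT : fderiv ℝ Θ p v = v.1 * dmu N Θ p + v.2.1 * dc N Θ p + v.2.2 ⬝ᵥ gradlam N Θ p :=
      lin_decomp N _ v
    have e1 : v.2.2 ⬝ᵥ Mfun N Θ p = (dmu N Θ p)⁻¹ * (v.2.2 ⬝ᵥ gradlam N Θ p) := by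
      simp [Mfun, dotProduct_smul]
    have e2 : dc N Θ p = afun N B Θ p + dmu N Θ p * Qimp N B (Mfun N Θ p) := by simp [afun]
    have e3 : kfun N Θ p = (dmu N Θ p)⁻¹ := by simp [kfun]
    simp only [zero_smul, add_zero, dotProduct_sub, dotProduct_smul, smul_eq_mul, Pi.mul_apply,
      Pi.add_apply, dotProduct_comm p.2.2]
    rw [hT, e1, e2, e3]
    field_simp
    ring
  obtain ⟨s, hso, hps, hsΩ, hsinj, himg, Ψ, hΨ, hΨs⟩ := inv_fun_aux _ Ω hΩ hΦ p hp hinj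
  have hΨp : Ψ (Phi N B Θ p) = p := hΨ p hps
  have dΨ : DifferentiableAt ℝ Ψ (Phi N B Θ p) :=
    (hΨs.contDiffAt (himg.mem_nhds ⟨p, hps, rfl⟩)).differentiableAt hne
  have hΦΨ : ∀ w, fderiv ℝ (Phi N B Θ) p (fderiv ℝ Ψ (Phi N B Θ p) w) = w := by
    have h1 : HasFDerivAt (Phi N B Θ) (fderiv ℝ (Phi N B Θ) p) (Ψ (Phi N B Θ p)) := by
      rw [hΨp]; exact (dif hΦ).hasFDerivAt
    have h2 := h1.comp _ dΨ.hasFDerivAt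
    have h3 : HasFDerivAt (Phi N B Θ ∘ Ψ) (ContinuousLinearMap.id ℝ (E N)) (Phi N B Θ p) := by
      refine (hasFDerivAt_id _).congr_of_eventuallyEq ?_
      filter_upwards [himg.mem_nhds ⟨p, hps, rfl⟩]
      rintro _ ⟨x, hx, rfl⟩
      simp [hΨ x hx]
    intro w
    exact DFunLike.congr_fun (h2.unique h3) w
  have hfin : ∀ w : E N, fderiv ℝ (Hav N Θ ∘ Ψ) (Phi N B Θ p) w =
      (Θ p - afun N B Θ p * p.2.1) * w.1 - kfun N Θ p * p.2.1 * w.2.1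
      + w.2.2 ⬝ᵥ (-p.2.1 • B⁻¹.mulVec (Mfun N Θ p) - p.2.2) := by
    intro w
    have h1 : HasFDerivAt (Hav N Θ) (fderiv ℝ (Hav N Θ) p) (Ψ (Phi N B Θ p)) := by
      rw [hΨp]; exact (dif hH).hasFDerivAt
    rw [(h1.comp _ dΨ.hasFDerivAt).fderiv, ContinuousLinearMap.comp_apply, hDH]
    have := hΦΨ w
    rw [hDΦ] at this
    obtain ⟨a1, a2⟩ := Prod.ext_iff.1 this
    obtain ⟨a2, a3⟩ := Prod.ext_iff.1 a2
    simp only at a1 a2 a3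
    rw [a1, a2, a3]
  refine ⟨s, hso, hps, hsΩ, hΦ.mono hsΩ, hsinj, himg, Ψ, hΨ, hΨs, ?_, ?_, ?_⟩
  · rw [hfin]; simp
  · rw [hfin]; simp
  · ext i
    rw [hfin]; simp only [single_dotProduct, mul_zero, sub_zero, zero_add, one_mul]
end

section
/- For every nonzero real k and every M ∈ ℝ^N, the matrix identity 𝔸(k, M) · 𝔹 · 𝔸(k, M)ᵀ = 𝕊 holds, where 𝕊 := [[0, −1, 0],[−1, 0, 0],[0, 0, B]]. -/
open Matrix

noncomputable section

/-- The matrix `𝔹 = [[0,1,0],[1,0,0],[0,0,B]]` in `1+1+N` block form. -/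
def BBmat (N : ℕ) (B : Matrix (Fin N) (Fin N) ℝ) : Matrix (Idx N) (Idx N) ℝ :=
  Matrix.of fun i j =>
    match i, j with
    | Sum.inl _, Sum.inr (Sum.inl _) => 1
    | Sum.inr (Sum.inl _), Sum.inl _ => 1
    | Sum.inr (Sum.inr a), Sum.inr (Sum.inr b) => B a b
    | _, _ => 0

/-- The matrix `𝔸(k,M) = [[−1/k,0,0],[−Q(M)/k, k, (B⁻¹M)ᵀ],[−M/k, 0, I_N]]`. -/
def AAmat (N : ℕ) (B : Matrix (Fin N) (Fin N) ℝ) (k : ℝ) (M : Fin N → ℝ) :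
    Matrix (Idx N) (Idx N) ℝ :=
  Matrix.of fun i j =>
    match i, j with
    | Sum.inl _, Sum.inl _ => -(1/k)
    | Sum.inl _, _ => 0
    | Sum.inr (Sum.inl _), Sum.inl _ => -(Qimp N B M / k)
    | Sum.inr (Sum.inl _), Sum.inr (Sum.inl _) => k
    | Sum.inr (Sum.inl _), Sum.inr (Sum.inr j') => B⁻¹.mulVec M j'
    | Sum.inr (Sum.inr i'), Sum.inl _ => -(M i' / k)
    | Sum.inr (Sum.inr _), Sum.inr (Sum.inl _) => 0
    | Sum.inr (Sum.inr i'), Sum.inr (Sum.inr j') => if i' = j' then 1 else 0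

/-- The matrix `𝕊 = [[0,−1,0],[−1,0,0],[0,0,B]]` in `1+1+N` block form. -/
def SSmat (N : ℕ) (B : Matrix (Fin N) (Fin N) ℝ) : Matrix (Idx N) (Idx N) ℝ :=
  Matrix.of fun i j =>
    match i, j with
    | Sum.inl _, Sum.inr (Sum.inl _) => -1
    | Sum.inr (Sum.inl _), Sum.inl _ => -1
    | Sum.inr (Sum.inr a), Sum.inr (Sum.inr b) => B a b
    | _, _ => 0

end

/-- for every `k ≠ 0` and every `M ∈ ℝ^N`, the matrix identity
`𝔸(k,M) 𝔹 𝔸(k,M)ᵀ = 𝕊` holds (Remark 10 of the paper). -/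
theorem stmt10 (N : ℕ) (hN : 1 ≤ N) (B : Matrix (Fin N) (Fin N) ℝ)
    (hBsymm : B.IsSymm) (hBinv : IsUnit B.det) :
    ∀ k : ℝ, k ≠ 0 → ∀ M : Fin N → ℝ,
      AAmat N B k M * BBmat N B * (AAmat N B k M)ᵀ = SSmat N B := by
  intro k hk M
  have h1 : ∀ b, ∑ a, (B⁻¹.mulVec M) a * B a b = M b := by
    intro b
    have h : B.mulVec (B⁻¹.mulVec M) = M := by
      rw [Matrix.mulVec_mulVec, Matrix.mul_nonsing_inv _ hBinv, Matrix.one_mulVec]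
    have h' := congrFun h b
    rw [← h']
    simp only [Matrix.mulVec, dotProduct]
    refine Finset.sum_congr rfl fun a _ => ?_
    rw [← hBsymm.apply a b]
    ring
  have h2 : ∑ a, M a * (B⁻¹.mulVec M) a = 2 * Qimp N B M := by
    simp only [Qimp, dotProduct]
    ring
  have h3 : ∀ b, ∑ a, B b a * (B⁻¹.mulVec M) a = M b := by
    intro b
    rw [← h1 b]
    refine Finset.sum_congr rfl fun a _ => ?_
    rw [← hBsymm.apply a b]
    ring
  ext i j
  rcases i with i | i | i <;> rcases j with j | j | j <;>
    simp [Matrix.mul_apply, AAmat, BBmat, SSmat, Fintype.sum_sum_type, h1, h2, h3, hk] <;>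
    field_simp <;> ring
end

section
/- Fix real numbers b ≠ 0, c, λ₂ and a smooth function τ : I → ℝ with τ > 0 on an open interval I. Define g(v) := −((c/b) v + λ₂)/τ(v) and q(v) := v g(v)/b on I. For v ∈ I define the vectors of ℝ⁴: V := (1, q(v), v, g(v)), W := (0, q'(v), 1, g'(v)), Z := (0, q''(v), 0, g''(v)), T := (1/√τ(v)) (0, v/b, 0, 1), E := (1,0,0,0), F := (0,−1,0,0), and let 𝕊 be the symmetric matrix [[0,−1,0,0],[−1,0,0,0],[0,0,0,b],[0,0,b,0]]. Then: V·𝕊⁻¹V = 0, V·𝕊⁻¹W = 0, V·𝕊⁻¹T = 0, V·𝕊⁻¹Z = −W·𝕊⁻¹W, T·𝕊⁻¹T = 0, T·𝕊⁻¹Z = 0, E = 𝕊⁻¹F, E·V = 1, E·W = 0, E·Z = 0, and E·T = 0. -/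
open Matrix

/-- key algebraic cancellations (Proposition 4, case `N = 2`) for the
vectors `V, W, Z, T, E, F` built from `g(v) = −((c/b) v + l₂)/τ(v)`,
`q(v) = v g(v)/b`, and the matrix `𝕊 = [[0,−1,0,0],[−1,0,0,0],[0,0,0,b],[0,0,b,0]]`. -/
theorem stmt11 (b c l₂ : ℝ) (hb : b ≠ 0) (I : Set ℝ) (hI : IsOpen I)
    (hconn : I.OrdConnected) (τ : ℝ → ℝ) (hτ : ContDiffOn ℝ (⊤ : ℕ∞) τ I)
    (hτpos : ∀ x ∈ I, 0 < τ x) :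
    let g : ℝ → ℝ := fun v => -((c / b) * v + l₂) / τ v
    let q : ℝ → ℝ := fun v => v * g v / b
    let 𝕊 : Matrix (Fin 4) (Fin 4) ℝ := !![0,-1,0,0; -1,0,0,0; 0,0,0,b; 0,0,b,0]
    ∀ v ∈ I,
      let V : Fin 4 → ℝ := ![1, q v, v, g v]
      let W : Fin 4 → ℝ := ![0, deriv q v, 1, deriv g v]
      let Z : Fin 4 → ℝ := ![0, deriv (deriv q) v, 0, deriv (deriv g) v]
      let T : Fin 4 → ℝ := (1 / Real.sqrt (τ v)) • ![0, v / b, 0, 1]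
      let Evec : Fin 4 → ℝ := ![1, 0, 0, 0]
      let F : Fin 4 → ℝ := ![0, -1, 0, 0]
      V ⬝ᵥ 𝕊⁻¹.mulVec V = 0 ∧
      V ⬝ᵥ 𝕊⁻¹.mulVec W = 0 ∧
      V ⬝ᵥ 𝕊⁻¹.mulVec T = 0 ∧
      V ⬝ᵥ 𝕊⁻¹.mulVec Z = -(W ⬝ᵥ 𝕊⁻¹.mulVec W) ∧
      T ⬝ᵥ 𝕊⁻¹.mulVec T = 0 ∧
      T ⬝ᵥ 𝕊⁻¹.mulVec Z = 0 ∧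
      Evec = 𝕊⁻¹.mulVec F ∧
      Evec ⬝ᵥ V = 1 ∧ Evec ⬝ᵥ W = 0 ∧ Evec ⬝ᵥ Z = 0 ∧ Evec ⬝ᵥ T = 0 := by
  intro g q S v hv V W Z T Evec F
  have hS : S⁻¹ = !![0,-1,0,0; -1,0,0,0; 0,0,0,1/b; 0,0,1/b,0] := by
    apply Matrix.inv_eq_right_inv
    ext i j
    fin_cases i <;> fin_cases j <;> simp [S, Matrix.mul_apply, Fin.sum_univ_four, hb]
  have hg : ContDiffOn ℝ (⊤ : ℕ∞) g I := by
    apply ContDiffOn.div _ hτ (fun x hx => (hτpos x hx).ne')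
    fun_prop
  have hgd : ∀ x ∈ I, HasDerivAt g (deriv g x) x := fun x hx =>
    ((hg.differentiableOn (by simp)).differentiableAt (hI.mem_nhds hx)).hasDerivAt
  have hg1 : ContDiffOn ℝ 1 (deriv g) I :=
    hg.deriv_of_isOpen hI (by
      have h : ((1 + 1 : ℕ∞) : WithTop ℕ∞) ≤ ((⊤ : ℕ∞) : WithTop ℕ∞) := WithTop.coe_le_coe.mpr le_top
      exact h)
  have hgdd : HasDerivAt (deriv g) (deriv (deriv g) v) v :=
    ((hg1.differentiableOn (by simp)).differentiableAt (hI.mem_nhds hv)).hasDerivAt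
  have hq : ∀ x ∈ I, deriv q x = (1 * g x + x * deriv g x) / b := fun x hx =>
    (((hasDerivAt_id x).mul (hgd x hx)).div_const b).deriv
  have hqq : deriv (deriv q) v =
      (deriv g v + (1 * deriv g v + v * deriv (deriv g) v)) / b := by
    have he : deriv q =ᶠ[nhds v] fun x => (g x + x * deriv g x) / b := by
      filter_upwards [hI.mem_nhds hv] with x hx
      rw [hq x hx, one_mul]
    rw [he.deriv_eq]
    exact (((hgd v hv).add ((hasDerivAt_id v).mul hgdd)).div_const b).deriv
  have hqv : q v = v * g v / b := rfl
  have hq1 := hq v hv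
  clear_value g q
  rw [hS]
  refine ⟨?_, ?_, ?_, ?_, ?_, ?_, ?_, ?_, ?_, ?_, ?_⟩
  on_goal 7 =>
    ext i
    fin_cases i <;> simp [Evec, F, Matrix.mulVec, dotProduct, Fin.sum_univ_four]
  all_goals
    simp [V, W, Z, T, Evec, Matrix.mulVec, dotProduct, Fin.sum_univ_four, hqv, hq1, hqq]
  all_goals
    try ring
end

section
/- Fix real numbers b ≠ 0, c, λ₂, a smooth function τ > 0 on an open interval I, and define g, q, and the vectors V, W, Z, T, F and the matrix 𝕊 as in the N = 2 setting. For v ∈ I set σ := 1/(b√τ(v)), w := 2 g'(v)/b, ζ := g''(v)/b, and let ℙ be the 4×4 matrix whose columns are 𝕊⁻¹F, 𝕊⁻¹V, 𝕊⁻¹T, 𝕊⁻¹W. Then ℙᵀ 𝕊 ℙ = [[0,1,0,0],[1,0,0,0],[0,0,0,σ],[0,0,σ,w]], and for all real numbers a, β, m, γ, n one has ℙᵀ ( a V⊗V + β (V⊗W + W⊗V) + m W⊗W + γ (V⊗Z + Z⊗V) + n T⊗T ) ℙ = [[a, −γ w, β σ, β w + γ ζ],[−γ w, 0, 0, 0],[β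 σ, 0, m σ², m σ w],[β w + γ ζ, 0, m σ w, m w² + n σ²]], where X⊗Y denotes the rank-one matrix X Yᵀ. -/
open Matrix

lemma alg12 (b s v g0 g1 g2 q0 q1 q2 : ℝ) (hb : b ≠ 0)
    (h0 : q0 = v * g0 / b) (h1 : q1 = (g0 + v * g1) / b) (h2 : q2 = (2 * g1 + v * g2) / b) :
    let 𝕊 : Matrix (Fin 4) (Fin 4) ℝ := !![0,-1,0,0; -1,0,0,0; 0,0,0,b; 0,0,b,0]
      let V : Fin 4 → ℝ := ![1, q0, v, g0]
      let W : Fin 4 → ℝ := ![0, q1, 1, g1]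
      let Z : Fin 4 → ℝ := ![0, q2, 0, g2]
      let T : Fin 4 → ℝ := (1 / s) • ![0, v / b, 0, 1]
      let F : Fin 4 → ℝ := ![0, -1, 0, 0]
      let σ : ℝ := 1 / (b * s)
      let w : ℝ := 2 * g1 / b
      let ζ : ℝ := g2 / b
      let ℙ : Matrix (Fin 4) (Fin 4) ℝ :=
        Matrix.of fun i j =>
          ![𝕊⁻¹.mulVec F, 𝕊⁻¹.mulVec V, 𝕊⁻¹.mulVec T, 𝕊⁻¹.mulVec W] j i
      ℙᵀ * 𝕊 * ℙ = !![0,1,0,0; 1,0,0,0; 0,0,0,σ; 0,0,σ,w] ∧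
      ∀ a β m γ n : ℝ,
        ℙᵀ * (a • vecMulVec V V
              + β • (vecMulVec V W + vecMulVec W V)
              + m • vecMulVec W W
              + γ • (vecMulVec V Z + vecMulVec Z V)
              + n • vecMulVec T T) * ℙ
          = !![a, -(γ*w), β*σ, β*w + γ*ζ;
               -(γ*w), 0, 0, 0;
               β*σ, 0, m*σ^2, m*σ*w;
               β*w + γ*ζ, 0, m*σ*w, m*w^2 + n*σ^2] := by
  intro 𝕊 V W Z T F σ w ζ ℙ
  have hinv : 𝕊⁻¹ = !![0,-1,0,0; -1,0,0,0; 0,0,0,b⁻¹; 0,0,b⁻¹,0] := by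
    apply Matrix.inv_eq_right_inv
    ext i j
    fin_cases i <;> fin_cases j <;>
      simp [𝕊, Matrix.mul_apply, Fin.sum_univ_four, hb]
  have hP : ℙ = !![1, -q0, -(s⁻¹ * (v / b)), -q1; 0, -1, 0, 0;
      0, g0 / b, s⁻¹ / b, g1 / b; 0, v / b, 0, 1 / b] := by
    ext i j
    simp only [ℙ, hinv]
    fin_cases i <;> fin_cases j <;>
      simp [F, V, T, W, Matrix.mulVec, dotProduct, Fin.sum_univ_four] <;> ring
  rw [hP]
  have hsb : σ = s⁻¹ * b⁻¹ := by simp only [σ, one_div, mul_inv]; ring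
  rw [hsb]
  generalize hr : s⁻¹ = r
  have hT : T = ![0, r * (v / b), 0, r] := by
    ext i; fin_cases i <;> simp [T, hr]
  rw [hT]
  subst h0 h1 h2
  constructor
  · ext i j
    fin_cases i <;> fin_cases j <;>
      simp [𝕊, w, Matrix.mul_apply, Fin.sum_univ_four] <;> field_simp <;> ring_nf <;> simp
  · intro a β m γ n
    generalize hQ : !![1, -(v * g0 / b), -(r * (v / b)), -((g0 + v * g1) / b); 0, -1, 0, 0;
      0, g0 / b, r / b, g1 / b; 0, v / b, 0, 1 / b] = Q
    have hV : Qᵀ *ᵥ V = ![1, 0, 0, 0] := by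
      ext i
      fin_cases i <;> simp [← hQ, V, Matrix.mulVec, dotProduct, Fin.sum_univ_four] <;>
        field_simp <;> ring
    have hW : Qᵀ *ᵥ W = ![0, 0, r * b⁻¹, w] := by
      ext i
      fin_cases i <;> simp [← hQ, W, w, Matrix.mulVec, dotProduct, Fin.sum_univ_four] <;>
        field_simp <;> ring
    have hZ : Qᵀ *ᵥ Z = ![0, -w, 0, ζ] := by
      ext i
      fin_cases i <;> simp [← hQ, Z, w, ζ, Matrix.mulVec, dotProduct, Fin.sum_univ_four] <;>
        field_simp <;> ring
    have hT' : Qᵀ *ᵥ ![0, r * (v / b), 0, r] = ![0, 0, 0, r * b⁻¹] := by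
      ext i
      fin_cases i <;> simp [← hQ, Matrix.mulVec, dotProduct, Fin.sum_univ_four] <;>
        field_simp <;> ring
    have key : ∀ X Y : Fin 4 → ℝ,
        Qᵀ * vecMulVec X Y * Q = vecMulVec (Qᵀ *ᵥ X) (Qᵀ *ᵥ Y) := by
      intro X Y
      rw [Matrix.mul_vecMulVec, Matrix.vecMulVec_mul, Matrix.mulVec_transpose Q Y]
    simp only [Matrix.mul_add, Matrix.add_mul, Matrix.mul_smul, Matrix.smul_mul, key,
      hV, hW, hZ, hT']
    clear_value w ζ
    ext i j
    fin_cases i <;> fin_cases j <;> simp <;> ring_nf <;> simp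

/-- structural conjugation formula (Corollary 3, case `N = 2`). With
`ℙ` the matrix whose columns are `𝕊⁻¹F, 𝕊⁻¹V, 𝕊⁻¹T, 𝕊⁻¹W`, one has
`ℙᵀ 𝕊 ℙ = [[0,1,0,0],[1,0,0,0],[0,0,0,σ],[0,0,σ,w]]` and the displayed formula for
`ℙᵀ (a V⊗V + β(V⊗W+W⊗V) + m W⊗W + γ(V⊗Z+Z⊗V) + n T⊗T) ℙ`. -/
theorem stmt12 (b c l₂ : ℝ) (hb : b ≠ 0) (I : Set ℝ) (hI : IsOpen I)
    (hconn : I.OrdConnected) (τ : ℝ → ℝ) (hτ : ContDiffOn ℝ (⊤ : ℕ∞) τ I)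
    (hτpos : ∀ x ∈ I, 0 < τ x) :
    let g : ℝ → ℝ := fun v => -((c / b) * v + l₂) / τ v
    let q : ℝ → ℝ := fun v => v * g v / b
    let 𝕊 : Matrix (Fin 4) (Fin 4) ℝ := !![0,-1,0,0; -1,0,0,0; 0,0,0,b; 0,0,b,0]
    ∀ v ∈ I,
      let V : Fin 4 → ℝ := ![1, q v, v, g v]
      let W : Fin 4 → ℝ := ![0, deriv q v, 1, deriv g v]
      let Z : Fin 4 → ℝ := ![0, deriv (deriv q) v, 0, deriv (deriv g) v]
      let T : Fin 4 → ℝ := (1 / Real.sqrt (τ v)) • ![0, v / b, 0, 1]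
      let F : Fin 4 → ℝ := ![0, -1, 0, 0]
      let σ : ℝ := 1 / (b * Real.sqrt (τ v))
      let w : ℝ := 2 * deriv g v / b
      let ζ : ℝ := deriv (deriv g) v / b
      let ℙ : Matrix (Fin 4) (Fin 4) ℝ :=
        Matrix.of fun i j =>
          ![𝕊⁻¹.mulVec F, 𝕊⁻¹.mulVec V, 𝕊⁻¹.mulVec T, 𝕊⁻¹.mulVec W] j i
      ℙᵀ * 𝕊 * ℙ = !![0,1,0,0; 1,0,0,0; 0,0,0,σ; 0,0,σ,w] ∧
      ∀ a β m γ n : ℝ,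
        ℙᵀ * (a • vecMulVec V V
              + β • (vecMulVec V W + vecMulVec W V)
              + m • vecMulVec W W
              + γ • (vecMulVec V Z + vecMulVec Z V)
              + n • vecMulVec T T) * ℙ
          = !![a, -(γ*w), β*σ, β*w + γ*ζ;
               -(γ*w), 0, 0, 0;
               β*σ, 0, m*σ^2, m*σ*w;
               β*w + γ*ζ, 0, m*σ*w, m*w^2 + n*σ^2] := by
  intro g q 𝕊 v hv
  have hg : ContDiffOn ℝ (⊤ : ℕ∞) g I := by
    apply ContDiffOn.div _ hτ (fun x hx => (hτpos x hx).ne')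
    fun_prop
  have hdg : ∀ x ∈ I, DifferentiableAt ℝ g x := fun x hx =>
    (hg.differentiableOn (by simp)).differentiableAt (hI.mem_nhds hx)
  have hg' : ContDiffOn ℝ 1 (deriv g) I := by
    apply hg.deriv_of_isOpen hI
    norm_cast
  have hdg' : DifferentiableAt ℝ (deriv g) v :=
    (hg'.differentiableOn (by simp)).differentiableAt (hI.mem_nhds hv)
  have hq1 : ∀ x ∈ I, deriv q x = (g x + x * deriv g x) / b := by
    intro x hx
    have := ((hasDerivAt_id x).mul (hdg x hx).hasDerivAt).div_const b
    refine this.deriv.trans ?_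
    simp
  have hq2 : deriv (deriv q) v = (2 * deriv g v + v * deriv (deriv g) v) / b := by
    have he : deriv q =ᶠ[nhds v] fun x => (g x + x * deriv g x) / b := by
      filter_upwards [hI.mem_nhds hv] with x hx using hq1 x hx
    rw [he.deriv_eq]
    have := (((hdg v hv).hasDerivAt).add
      ((hasDerivAt_id v).mul hdg'.hasDerivAt)).div_const b
    refine this.deriv.trans ?_
    simp only [id]
    ring
  exact alg12 b (Real.sqrt (τ v)) v (g v) (deriv g v) (deriv (deriv g) v) (q v) (deriv q v)
    (deriv (deriv q) v) hb rfl (hq1 v hv) hq2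
end

section
/- Let N ≥ 1, let v, a ∈ ℝ, let l₀, r₀ ∈ ℝ^N, and let M be a real N×N matrix such that v is not an eigenvalue of M. Set l := (Mᵀ − v I_N)⁻¹ l₀ and r := −(M − v I_N)⁻¹ r₀, and let P be the (N+2)×(N+2) matrix [[1, 0, lᵀ],[0, 1, 0],[0, r, I_N]]. Then P is invertible and P⁻¹ · [[v, a, l₀ᵀ],[0, v, 0],[0, r₀, M]] · P = [[v, a − l₀ᵀ (M − v I_N)⁻¹ r₀, 0],[0, v, 0],[0, 0, M]]. -/
open Matrix

noncomputable section

/-- The block matrix `[[v, a, l₀ᵀ],[0, v, 0],[0, r₀, M]]`. -/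
def Tmat (N : ℕ) (v a : ℝ) (l₀ r₀ : Fin N → ℝ) (M : Matrix (Fin N) (Fin N) ℝ) :
    Matrix (Idx N) (Idx N) ℝ :=
  Matrix.of fun i j =>
    match i, j with
    | Sum.inl _, Sum.inl _ => v
    | Sum.inl _, Sum.inr (Sum.inl _) => a
    | Sum.inl _, Sum.inr (Sum.inr j') => l₀ j'
    | Sum.inr (Sum.inl _), Sum.inr (Sum.inl _) => v
    | Sum.inr (Sum.inr i'), Sum.inr (Sum.inl _) => r₀ i'
    | Sum.inr (Sum.inr i'), Sum.inr (Sum.inr j') => M i' j'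
    | _, _ => 0

/-- The change-of-basis matrix `[[1, 0, lᵀ],[0, 1, 0],[0, r, I_N]]`. -/
def Pmat (N : ℕ) (l r : Fin N → ℝ) : Matrix (Idx N) (Idx N) ℝ :=
  Matrix.of fun i j =>
    match i, j with
    | Sum.inl _, Sum.inl _ => 1
    | Sum.inl _, Sum.inr (Sum.inr j') => l j'
    | Sum.inr (Sum.inl _), Sum.inr (Sum.inl _) => 1
    | Sum.inr (Sum.inr i'), Sum.inr (Sum.inl _) => r i'
    | Sum.inr (Sum.inr i'), Sum.inr (Sum.inr j') => if i' = j' then 1 else 0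
    | _, _ => 0

/-- The block-diagonalized matrix
`[[v, a − l₀ᵀ(M − v I)⁻¹ r₀, 0],[0, v, 0],[0, 0, M]]`. -/
def Dmat (N : ℕ) (v a : ℝ) (l₀ r₀ : Fin N → ℝ) (M : Matrix (Fin N) (Fin N) ℝ) :
    Matrix (Idx N) (Idx N) ℝ :=
  Matrix.of fun i j =>
    match i, j with
    | Sum.inl _, Sum.inl _ => v
    | Sum.inl _, Sum.inr (Sum.inl _) =>
        a - l₀ ⬝ᵥ (M - v • (1 : Matrix (Fin N) (Fin N) ℝ))⁻¹.mulVec r₀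
    | Sum.inr (Sum.inl _), Sum.inr (Sum.inl _) => v
    | Sum.inr (Sum.inr i'), Sum.inr (Sum.inr j') => M i' j'
    | _, _ => 0

end

/-- Explicit inverse of `Pmat`. -/
def Qmat (N : ℕ) (l r : Fin N → ℝ) : Matrix (Idx N) (Idx N) ℝ :=
  Matrix.of fun i j =>
    match i, j with
    | Sum.inl _, Sum.inl _ => 1
    | Sum.inl _, Sum.inr (Sum.inl _) => l ⬝ᵥ r
    | Sum.inl _, Sum.inr (Sum.inr j') => - l j'
    | Sum.inr (Sum.inl _), Sum.inr (Sum.inl _) => 1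
    | Sum.inr (Sum.inr i'), Sum.inr (Sum.inl _) => - r i'
    | Sum.inr (Sum.inr i'), Sum.inr (Sum.inr j') => if i' = j' then 1 else 0
    | _, _ => 0

theorem Pmat_mul_Qmat (N : ℕ) (l r : Fin N → ℝ) : Pmat N l r * Qmat N l r = 1 := by
  ext i j
  rcases i with i | i | i <;> rcases j with j | j | j <;>
    simp [Matrix.mul_apply, Pmat, Qmat, dotProduct, Matrix.one_apply, eq_iff_true_of_subsingleton]

theorem Tmat_mul_Pmat (N : ℕ) (v a : ℝ) (l₀ r₀ l r : Fin N → ℝ)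
    (M : Matrix (Fin N) (Fin N) ℝ)
    (hl : (Mᵀ - v • (1 : Matrix (Fin N) (Fin N) ℝ)).mulVec l = l₀)
    (hr : (M - v • (1 : Matrix (Fin N) (Fin N) ℝ)).mulVec r = - r₀)
    (hr' : r = -((M - v • (1 : Matrix (Fin N) (Fin N) ℝ))⁻¹.mulVec r₀)) :
    Tmat N v a l₀ r₀ M * Pmat N l r = Pmat N l r * Dmat N v a l₀ r₀ M := by
  have ha : a - l₀ ⬝ᵥ (M - v • (1 : Matrix (Fin N) (Fin N) ℝ))⁻¹.mulVec r₀
      = a + l₀ ⬝ᵥ r := by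
    rw [hr', dotProduct_neg]; ring
  have hl' : ∀ j, v * l j + l₀ j = ∑ i, l i * M i j := by
    intro j
    have := congrFun hl j
    rw [sub_mulVec, smul_mulVec, one_mulVec] at this
    simp only [Pi.sub_apply, Pi.smul_apply, smul_eq_mul, mulVec, dotProduct,
      transpose_apply] at this
    rw [← this]
    simp [mul_comm]
  have hr2 : ∀ i, r₀ i + ∑ j, M i j * r j = r i * v := by
    intro i
    have := congrFun hr i
    rw [sub_mulVec, smul_mulVec, one_mulVec] at this
    simp only [Pi.sub_apply, Pi.smul_apply, smul_eq_mul, mulVec, dotProduct,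
      Pi.neg_apply] at this
    linarith
  ext i j
  rcases i with i | i | i <;> rcases j with j | j | j <;>
    simp [Matrix.mul_apply, Pmat, Tmat, Dmat, ha, hl', hr2]
  rfl

/-- Lemma 1 of the paper: if `v` is not an eigenvalue of `M`, then
with `l = (Mᵀ − v I)⁻¹ l₀`, `r = −(M − v I)⁻¹ r₀` and
`P = [[1,0,lᵀ],[0,1,0],[0,r,I_N]]`, the matrix `P` is invertible and
`P⁻¹ [[v,a,l₀ᵀ],[0,v,0],[0,r₀,M]] P = [[v, a − l₀ᵀ(M−vI)⁻¹r₀, 0],[0,v,0],[0,0,M]]`. -/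
theorem stmt14 (N : ℕ) (hN : 1 ≤ N) (v a : ℝ) (l₀ r₀ : Fin N → ℝ)
    (M : Matrix (Fin N) (Fin N) ℝ)
    (hv : (M - v • (1 : Matrix (Fin N) (Fin N) ℝ)).det ≠ 0) :
    IsUnit (Pmat N ((Mᵀ - v • (1 : Matrix (Fin N) (Fin N) ℝ))⁻¹.mulVec l₀)
        (-((M - v • (1 : Matrix (Fin N) (Fin N) ℝ))⁻¹.mulVec r₀))).det ∧
    (Pmat N ((Mᵀ - v • (1 : Matrix (Fin N) (Fin N) ℝ))⁻¹.mulVec l₀)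
        (-((M - v • (1 : Matrix (Fin N) (Fin N) ℝ))⁻¹.mulVec r₀)))⁻¹
      * Tmat N v a l₀ r₀ M
      * Pmat N ((Mᵀ - v • (1 : Matrix (Fin N) (Fin N) ℝ))⁻¹.mulVec l₀)
          (-((M - v • (1 : Matrix (Fin N) (Fin N) ℝ))⁻¹.mulVec r₀))
      = Dmat N v a l₀ r₀ M := by
  have hv' : (Mᵀ - v • (1 : Matrix (Fin N) (Fin N) ℝ)).det ≠ 0 := by
    have : Mᵀ - v • (1 : Matrix (Fin N) (Fin N) ℝ)
        = (M - v • (1 : Matrix (Fin N) (Fin N) ℝ))ᵀ := by simp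
    rw [this, det_transpose]; exact hv
  have key := Tmat_mul_Pmat N v a l₀ r₀
    ((Mᵀ - v • (1 : Matrix (Fin N) (Fin N) ℝ))⁻¹.mulVec l₀)
    (-((M - v • (1 : Matrix (Fin N) (Fin N) ℝ))⁻¹.mulVec r₀)) M
    (by rw [mulVec_mulVec, mul_nonsing_inv _ hv'.isUnit, one_mulVec])
    (by rw [mulVec_neg, mulVec_mulVec, mul_nonsing_inv _ hv.isUnit, one_mulVec]) rfl
  have hu := isUnit_det_of_right_inverse (Pmat_mul_Qmat N
    ((Mᵀ - v • (1 : Matrix (Fin N) (Fin N) ℝ))⁻¹.mulVec l₀)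
    (-((M - v • (1 : Matrix (Fin N) (Fin N) ℝ))⁻¹.mulVec r₀)))
  refine ⟨hu, ?_⟩
  rw [Matrix.mul_assoc, key, ← Matrix.mul_assoc, nonsing_inv_mul _ hu, Matrix.one_mul]
end

section
/- Let N ≥ 1, let v, a ∈ ℝ, let l₀, r₀ ∈ ℝ^N, and let M be a real N×N matrix such that v is not an eigenvalue of M. Let T be the (N+2)×(N+2) matrix [[v, a, l₀ᵀ],[0, v, 0],[0, r₀, M]] in (1+1+N) block form. Then the characteristic polynomial of T equals (X − v)² times the characteristic polynomial of M, and the eigenspace ker(T − v I_{N+2}) has dimension 2 if a = l₀ᵀ (M − v I_N)⁻¹ r₀ and dimension 1 otherwise; i.e., v is a semisimple eigenvalue of T if and only if a = l₀ᵀ (M − v I_N)⁻¹ r₀. -/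
open Matrix

theorem Tmat_eq_blocks (N : ℕ) (v a : ℝ) (l₀ r₀ : Fin N → ℝ)
    (M : Matrix (Fin N) (Fin N) ℝ) :
    Tmat N v a l₀ r₀ M =
      Matrix.fromBlocks (Matrix.of fun (_ _ : Fin 1) => v)
        (Matrix.of fun _ j => Sum.elim (fun _ => a) l₀ j) 0
        (Matrix.fromBlocks (Matrix.of fun (_ _ : Fin 1) => v) 0
          (Matrix.of fun i _ => r₀ i) M) := by
  ext i j
  rcases i with i | i | i <;> rcases j with j | j | j <;> simp [Tmat]

open Polynomial in
theorem charpoly_one_aux (v : ℝ) :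
    (Matrix.of fun (_ _ : Fin 1) => v).charpoly = X - C v := by
  simp [Matrix.charpoly, Matrix.charmatrix]

theorem mem_ker_aux (N : ℕ) (v a : ℝ) (l₀ r₀ : Fin N → ℝ)
    (M : Matrix (Fin N) (Fin N) ℝ)
    (hv : (M - v • (1 : Matrix (Fin N) (Fin N) ℝ)).det ≠ 0) (x : Idx N → ℝ) :
    x ∈ LinearMap.ker (Matrix.toLin'
          (Tmat N v a l₀ r₀ M - v • (1 : Matrix (Idx N) (Idx N) ℝ))) ↔
    (x (Sum.inr (Sum.inl 0)) *
        (a - l₀ ⬝ᵥ (M - v • (1 : Matrix (Fin N) (Fin N) ℝ))⁻¹.mulVec r₀) = 0 ∧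
      (fun i => x (Sum.inr (Sum.inr i))) =
        -(x (Sum.inr (Sum.inl 0)) •
          (M - v • (1 : Matrix (Fin N) (Fin N) ℝ))⁻¹.mulVec r₀)) := by
  set A := M - v • (1 : Matrix (Fin N) (Fin N) ℝ) with hA
  have hu : IsUnit A.det := isUnit_iff_ne_zero.mpr hv
  set y := x (Sum.inr (Sum.inl 0)) with hy
  set z : Fin N → ℝ := fun i => x (Sum.inr (Sum.inr i)) with hz
  have h1 : x ∈ LinearMap.ker (Matrix.toLin'
          (Tmat N v a l₀ r₀ M - v • (1 : Matrix (Idx N) (Idx N) ℝ))) ↔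
      (a * y + l₀ ⬝ᵥ z = 0 ∧ y • r₀ + A.mulVec z = 0) := by
    rw [LinearMap.mem_ker, Matrix.toLin'_apply]
    have e1 : ∀ i, ((Tmat N v a l₀ r₀ M - v • (1 : Matrix (Idx N) (Idx N) ℝ)) *ᵥ x)
        (Sum.inl i) = a * y + l₀ ⬝ᵥ z := by
      intro i
      have : i = 0 := Subsingleton.elim _ _
      subst this
      simp [Matrix.mulVec, dotProduct, Tmat, hy, hz, Matrix.one_apply]
    have e2 : ∀ i, ((Tmat N v a l₀ r₀ M - v • (1 : Matrix (Idx N) (Idx N) ℝ)) *ᵥ x)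
        (Sum.inr (Sum.inl i)) = 0 := by
      intro i
      have : i = 0 := Subsingleton.elim _ _
      subst this
      simp [Matrix.mulVec, dotProduct, Tmat, Matrix.one_apply]
    have e3 : ∀ i, ((Tmat N v a l₀ r₀ M - v • (1 : Matrix (Idx N) (Idx N) ℝ)) *ᵥ x)
        (Sum.inr (Sum.inr i)) = (y • r₀ + A.mulVec z) i := by
      intro i
      simp [Matrix.mulVec, dotProduct, Tmat, hy, hz, hA, Matrix.one_apply, mul_comm]
    constructor
    · intro h
      refine ⟨by rw [← e1 0, h]; rfl, ?_⟩
      ext i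
      rw [← e3 i, h]; rfl
    · rintro ⟨h, h'⟩
      ext i
      rcases i with i | i | i
      · rw [e1, h]; rfl
      · rw [e2]; rfl
      · rw [e3, h']
        rfl
  rw [h1]
  have h2 : y • r₀ + A.mulVec z = 0 ↔ z = -(y • A⁻¹.mulVec r₀) := by
    constructor
    · intro h
      have h3 := congrArg (A⁻¹.mulVec) h
      rw [Matrix.mulVec_add, Matrix.mulVec_mulVec, Matrix.nonsing_inv_mul _ hu,
        Matrix.one_mulVec, Matrix.mulVec_smul, Matrix.mulVec_zero] at h3
      exact eq_neg_of_add_eq_zero_right h3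
    · intro h
      rw [h, Matrix.mulVec_neg, Matrix.mulVec_smul, Matrix.mulVec_mulVec,
        Matrix.mul_nonsing_inv _ hu, Matrix.one_mulVec, add_neg_cancel]
  rw [h2]
  refine and_congr_left fun h => ?_
  rw [h, dotProduct_neg, dotProduct_smul, smul_eq_mul]
  ring_nf

open Polynomial in
/-- semisimplicity criterion underlying Corollary 5: for
`T = [[v,a,l₀ᵀ],[0,v,0],[0,r₀,M]]` with `v` not an eigenvalue of `M`, the
characteristic polynomial of `T` is `(X − v)²·charpoly M`, and the eigenspace
`ker(T − v I)` has dimension `2` if `a = l₀ᵀ(M − v I)⁻¹ r₀`, dimension `1`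
otherwise; i.e. `v` is semisimple iff `a = l₀ᵀ(M − v I)⁻¹ r₀`. -/
theorem stmt15 (N : ℕ) (hN : 1 ≤ N) (v a : ℝ) (l₀ r₀ : Fin N → ℝ)
    (M : Matrix (Fin N) (Fin N) ℝ)
    (hv : (M - v • (1 : Matrix (Fin N) (Fin N) ℝ)).det ≠ 0) :
    (Tmat N v a l₀ r₀ M).charpoly = (X - C v) ^ 2 * M.charpoly ∧
    (a = l₀ ⬝ᵥ (M - v • (1 : Matrix (Fin N) (Fin N) ℝ))⁻¹.mulVec r₀ →
      Module.finrank ℝ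
        (LinearMap.ker (Matrix.toLin'
          (Tmat N v a l₀ r₀ M - v • (1 : Matrix (Idx N) (Idx N) ℝ)))) = 2) ∧
    (a ≠ l₀ ⬝ᵥ (M - v • (1 : Matrix (Fin N) (Fin N) ℝ))⁻¹.mulVec r₀ →
      Module.finrank ℝ
        (LinearMap.ker (Matrix.toLin'
          (Tmat N v a l₀ r₀ M - v • (1 : Matrix (Idx N) (Idx N) ℝ)))) = 1) := by
  refine ⟨?_, ?_, ?_⟩
  · rw [Tmat_eq_blocks, Matrix.charpoly_fromBlocks_zero₂₁,
      Matrix.charpoly_fromBlocks_zero₁₂, charpoly_one_aux]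
    ring
  · intro ha
    set w := (M - v • (1 : Matrix (Fin N) (Fin N) ℝ))⁻¹.mulVec r₀ with hw
    let f : (ℝ × ℝ) →ₗ[ℝ] (Idx N → ℝ) :=
      { toFun := fun p => Sum.elim (fun _ => p.1) (Sum.elim (fun _ => p.2) (-(p.2 • w)))
        map_add' := by
          intro p q
          ext i
          rcases i with i | i | i <;> simp
          ring
        map_smul' := by
          intro c p
          ext i
          rcases i with i | i | i <;> simp
          ring }
    have hinj : Function.Injective f := by
      intro p q h
      refine Prod.ext ?_ ?_
      · exact congrFun h (Sum.inl 0)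
      · exact congrFun h (Sum.inr (Sum.inl 0))
    have hker : LinearMap.ker (Matrix.toLin'
          (Tmat N v a l₀ r₀ M - v • (1 : Matrix (Idx N) (Idx N) ℝ))) =
        LinearMap.range f := by
      ext x
      rw [mem_ker_aux N v a l₀ r₀ M hv, ← hw, LinearMap.mem_range]
      constructor
      · rintro ⟨-, h⟩
        refine ⟨(x (Sum.inl 0), x (Sum.inr (Sum.inl 0))), ?_⟩
        ext i
        rcases i with i | i | i
        · rw [Subsingleton.elim i 0]; rfl
        · rw [Subsingleton.elim i 0]; rfl
        · exact (congrFun h i).symm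
      · rintro ⟨p, rfl⟩
        refine ⟨by rw [← ha, sub_self, mul_zero], ?_⟩
        rfl
    rw [hker, LinearMap.finrank_range_of_inj hinj]
    simp
  · intro ha
    have hker : LinearMap.ker (Matrix.toLin'
          (Tmat N v a l₀ r₀ M - v • (1 : Matrix (Idx N) (Idx N) ℝ))) =
        Submodule.span ℝ {(Pi.single (Sum.inl 0) 1 : Idx N → ℝ)} := by
      ext x
      rw [mem_ker_aux N v a l₀ r₀ M hv, Submodule.mem_span_singleton]
      constructor
      · rintro ⟨h0, h⟩
        have hy := (mul_eq_zero.mp h0).resolve_right (sub_ne_zero.mpr ha)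
        rw [hy, zero_smul, neg_zero] at h
        refine ⟨x (Sum.inl 0), ?_⟩
        ext i
        rcases i with i | i | i
        · rw [Subsingleton.elim i 0]; simp
        · rw [Subsingleton.elim i 0, hy]; simp
        · have := congrFun h i
          simp at this
          simp [this]
      · rintro ⟨c, rfl⟩
        constructor
        · simp
        · ext i
          simp
    rw [hker]
    apply finrank_span_singleton
    intro h
    have := congrFun h (Sum.inl 0)
    simp at this
end

section
/- Let τ, f : I → ℝ be smooth with τ > 0 on an open interval I, let b ≠ 0 and c, λ₁, λ₂ be real numbers. Define g(v) := −((c/b) v + λ₂)/τ(v), the Hamiltonian density at zero gradient H₀(v, u) := (1/2) τ(v) u² + f(v), the matrix B := [[0, b],[b, 0]], and the potential W(v) := −f(v) − (1/2) τ(v) g(v)² − (c/b) v g(v) − λ₁ v − λ₂ g(v). Then for every v ∈ I: tr( B ∇²H₀(v, g(v)) + c I₂ ) = −2 b τ(v) g'(v) and det( B ∇²H₀(v, g(v)) + c I₂ ) = b² τ(v) W''(v), where ∇²H₀ is the Hessian of H₀ in (v, u) evaluated at (v, g(v)), and W'' is the second derivative of the function v ↦ W(v). -/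
open Matrix

/-- with `g(v) = −((c/b) v + l₂)/τ(v)`,
`H₀(v,u) = (1/2) τ(v) u² + f(v)`, `B = [[0,b],[b,0]]`, and the potential
`W(v) = −f(v) − (1/2) τ(v) g(v)² − (c/b) v g(v) − l₁ v − l₂ g(v)`, one has
`tr(B ∇²H₀(v,g(v)) + c I₂) = −2 b τ(v) g'(v)` and
`det(B ∇²H₀(v,g(v)) + c I₂) = b² τ(v) W''(v)` for every `v ∈ I`. -/
theorem stmt19 (I : Set ℝ) (hI : IsOpen I) (hconn : I.OrdConnected)
    (τ f : ℝ → ℝ) (hτ : ContDiffOn ℝ (⊤ : ℕ∞) τ I) (hf : ContDiffOn ℝ (⊤ : ℕ∞) f I)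
    (hτpos : ∀ v ∈ I, 0 < τ v)
    (b c l₁ l₂ : ℝ) (hb : b ≠ 0) :
    let g : ℝ → ℝ := fun v => -((c / b) * v + l₂) / τ v
    let H₀ : ℝ → ℝ → ℝ := fun v u => (1/2) * τ v * u ^ 2 + f v
    let B : Matrix (Fin 2) (Fin 2) ℝ := !![0, b; b, 0]
    let W : ℝ → ℝ := fun v =>
      -f v - (1/2) * τ v * (g v) ^ 2 - (c / b) * v * g v - l₁ * v - l₂ * g v
    let Hess : ℝ → ℝ → Matrix (Fin 2) (Fin 2) ℝ := fun v u =>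
      !![deriv (deriv (fun x => H₀ x u)) v,
         deriv (fun x => deriv (fun y => H₀ x y) u) v;
         deriv (fun y => deriv (fun x => H₀ x y) v) u,
         deriv (deriv (fun y => H₀ v y)) u]
    ∀ v ∈ I,
      (B * Hess v (g v) + c • (1 : Matrix (Fin 2) (Fin 2) ℝ)).trace
        = -2 * b * τ v * deriv g v ∧
      (B * Hess v (g v) + c • (1 : Matrix (Fin 2) (Fin 2) ℝ)).det
        = b ^ 2 * τ v * iteratedDeriv 2 W v := by
  intro g H₀ B W Hess v hv
  have key : ∀ h : ℝ → ℝ, ContDiffOn ℝ (⊤ : ℕ∞) h I → ∀ x ∈ I,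
      HasDerivAt h (deriv h x) x ∧ HasDerivAt (deriv h) (deriv (deriv h) x) x := by
    intro h hh x hx
    have h1 : DifferentiableOn ℝ h I := hh.differentiableOn (by simp)
    have h2 : ContDiffOn ℝ 1 (deriv h) I :=
      hh.deriv_of_isOpen hI (WithTop.coe_le_coe.2 (le_top : ((1 + 1 : ℕ∞)) ≤ ⊤))
    have h3 : DifferentiableOn ℝ (deriv h) I := h2.differentiableOn (by simp)
    exact ⟨(h1.differentiableAt (hI.mem_nhds hx)).hasDerivAt,
      (h3.differentiableAt (hI.mem_nhds hx)).hasDerivAt⟩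
  have kτ := key τ hτ
  have kf := key f hf
  have hgτ : ∀ x ∈ I, g x * τ x = -((c / b) * x + l₂) := by
    intro x hx
    have := (hτpos x hx).ne'
    simp only [g]
    field_simp
  have hg : ∀ x ∈ I, HasDerivAt g (deriv g x) x := by
    intro x hx
    have h1 : HasDerivAt (fun v : ℝ => -((c / b) * v + l₂)) (-((c / b) * 1)) x :=
      (((hasDerivAt_id x).const_mul (c / b)).add_const l₂).neg
    exact (h1.div (kτ x hx).1 (hτpos x hx).ne').differentiableAt.hasDerivAt
  have hg' : ∀ x ∈ I, deriv g x * τ x + g x * deriv τ x = -(c / b) := by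
    intro x hx
    have h1 : HasDerivAt (fun v : ℝ => -((c / b) * v + l₂)) (-((c / b) * 1)) x :=
      (((hasDerivAt_id x).const_mul (c / b)).add_const l₂).neg
    have h2 := (hg x hx).mul (kτ x hx).1
    have h3 : (fun v : ℝ => -((c / b) * v + l₂)) =ᶠ[nhds x] (g * τ) := by
      filter_upwards [hI.mem_nhds hx] with y hy
      exact (hgτ y hy).symm
    have h4 := (h2.congr_of_eventuallyEq h3).unique h1
    rw [h4]; ring
  have hW1 : ∀ x ∈ I, deriv W x
      = -deriv f x - (1/2) * deriv τ x * (g x) ^ 2 - (c / b) * g x - l₁ := by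
    intro x hx
    have h := (((((kf x hx).1.neg).sub
      (((kτ x hx).1.const_mul (1/2)).mul ((hg x hx).pow 2))).sub
      (((hasDerivAt_id x).const_mul (c / b)).mul (hg x hx))).sub
      ((hasDerivAt_id x).const_mul l₁)).sub ((hg x hx).const_mul l₂)
    have h' : HasDerivAt W _ x := h
    rw [h'.deriv]
    simp only [id, Pi.pow_apply]
    have := hgτ x hx
    push_cast
    linear_combination (-deriv g x) * this
  have hW2 : iteratedDeriv 2 W v = -deriv (deriv f) v
      - (1/2) * deriv (deriv τ) v * (g v) ^ 2 - deriv τ v * g v * deriv g v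
      - (c / b) * deriv g v := by
    rw [iteratedDeriv_succ, iteratedDeriv_one]
    have h3 : deriv W =ᶠ[nhds v]
        (fun x => -deriv f x - (1/2) * deriv τ x * (g x) ^ 2 - (c / b) * g x - l₁) := by
      filter_upwards [hI.mem_nhds hv] with y hy
      exact hW1 y hy
    rw [h3.deriv_eq]
    have h := ((((kf v hv).2.neg).sub
      (((kτ v hv).2.const_mul (1/2)).mul ((hg v hv).pow 2))).sub
      ((hg v hv).const_mul (c / b))).sub_const l₁
    refine (HasDerivAt.deriv h).trans ?_
    simp only [Pi.pow_apply]
    push_cast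
    ring
  have hx1 : ∀ u, ∀ x ∈ I, deriv (fun x => H₀ x u) x
      = (1/2) * deriv τ x * u ^ 2 + deriv f x := by
    intro u x hx
    exact HasDerivAt.deriv ((((kτ x hx).1.const_mul (1/2)).mul_const (u ^ 2)).add (kf x hx).1)
  have hy1 : ∀ x u, deriv (fun y => H₀ x y) u = τ x * u := by
    intro x u
    have h := (((hasDerivAt_id u).pow 2).const_mul ((1/2) * τ x)).add_const (f x)
    refine (HasDerivAt.deriv h).trans ?_
    simp only [id]
    push_cast
    ring
  have e11 : ∀ u, deriv (deriv (fun x => H₀ x u)) v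
      = (1/2) * deriv (deriv τ) v * u ^ 2 + deriv (deriv f) v := by
    intro u
    have h3 : deriv (fun x => H₀ x u) =ᶠ[nhds v]
        (fun x => (1/2) * deriv τ x * u ^ 2 + deriv f x) := by
      filter_upwards [hI.mem_nhds hv] with y hy
      exact hx1 u y hy
    rw [h3.deriv_eq]
    exact HasDerivAt.deriv ((((kτ v hv).2.const_mul (1/2)).mul_const (u ^ 2)).add (kf v hv).2)
  have e12 : ∀ u, deriv (fun x => deriv (fun y => H₀ x y) u) v = deriv τ v * u := by
    intro u
    simp only [hy1]
    exact HasDerivAt.deriv ((kτ v hv).1.mul_const u)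
  have e21 : ∀ u, deriv (fun y => deriv (fun x => H₀ x y) v) u = deriv τ v * u := by
    intro u
    have : (fun y => deriv (fun x => H₀ x y) v)
        = fun y => (1/2) * deriv τ v * y ^ 2 + deriv f v := by
      funext y
      exact hx1 y v hv
    rw [this]
    have h := (((hasDerivAt_id u).pow 2).const_mul ((1/2) * deriv τ v)).add_const (deriv f v)
    refine (HasDerivAt.deriv h).trans ?_
    simp only [id]
    push_cast
    ring
  have e22 : ∀ u, deriv (deriv (fun y => H₀ v y)) u = τ v := by
    intro u
    have : deriv (fun y => H₀ v y) = fun y => τ v * y := by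
      funext y
      exact hy1 v y
    rw [this]
    refine (HasDerivAt.deriv ((hasDerivAt_id u).const_mul (τ v))).trans ?_
    ring
  have hH : Hess v (g v) = !![(1/2) * deriv (deriv τ) v * (g v) ^ 2 + deriv (deriv f) v,
      deriv τ v * g v; deriv τ v * g v, τ v] := by
    simp only [Hess, e11, e12, e21, e22]
  have hM : B * Hess v (g v) + c • (1 : Matrix (Fin 2) (Fin 2) ℝ)
      = !![b * (deriv τ v * g v) + c, b * τ v;
        b * ((1/2) * deriv (deriv τ) v * (g v) ^ 2 + deriv (deriv f) v),
        b * (deriv τ v * g v) + c] := by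
    rw [hH]
    ext i j
    fin_cases i <;> fin_cases j <;> simp [B, Matrix.mul_apply, Fin.sum_univ_two]
  have hk := hg' v hv
  have hc : b * (c / b) = c := by field_simp
  rw [hM, Matrix.trace_fin_two_of, Matrix.det_fin_two_of, hW2]
  clear_value g
  generalize c / b = k at *
  subst hc
  constructor
  · linear_combination 2 * b * hk
  · linear_combination (b ^ 2 * (deriv τ v * g v + k)) * hk
end
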